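/- Let ν be the standard Gaussian on ℝ^d and B₁, ..., B_K a partition with ν(∪_{j≠i} B_j) = Φ(a_{≠i}). Define r_Z(z) = dist(z, complement of the cell of z). Then E_{z~ν}[r_Z(z)] ≤ Σ_{i=1}^K [-a_{≠i}·Φ(-a_{≠i}) + e^{-a_{≠i}²/2}/√(2π)]. -/

import Mathlib

open Real Set MeasureTheory ProbabilityTheory

/-- The standard normal cumulative distribution function. -/
noncomputable def Phi (x : ℝ) : ℝ :=
  (Real.sqrt (2 * π))⁻¹ * ∫ u in Set.Iic x, Real.exp (-u ^ 2 / 2)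

/-- The inverse of the standard normal cdf. -/
noncomputable def PhiInv : ℝ → ℝ := Function.invFun Phi

/-- The standard Gaussian measure `N(0, I_d)` on `ℝ^d`. -/
noncomputable def stdGaussian (d : ℕ) : Measure (Fin d → ℝ) :=
  Measure.pi fun _ => gaussianReal 0 1

/-- The Euclidean (ℓ₂) norm on `ℝ^d`. -/
noncomputable def l2 {d : ℕ} (z : Fin d → ℝ) : ℝ := Real.sqrt (∑ i, z i ^ 2)

/-- The ℓ₂ distance from a point to a set. -/
noncomputable def distSet {d : ℕ} (z : Fin d → ℝ) (A : Set (Fin d → ℝ)) : ℝ :=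
  sInf {t | ∃ z' ∈ A, t = l2 (z - z')}

open scoped RealInnerProductSpace

theorem gaussianPDFReal_zero_one_apply (x : ℝ) :
    gaussianPDFReal 0 1 x = (√(2 * π))⁻¹ * rexp (-x ^ 2 / 2) := by
  simp [gaussianPDFReal]

theorem gaussianPDFReal_zero_one_le_one (x : ℝ) : gaussianPDFReal 0 1 x ≤ 1 := by
  rw [gaussianPDFReal_zero_one_apply]
  have h1 : rexp (-x ^ 2 / 2) ≤ 1 := Real.exp_le_one_iff.2 (by nlinarith [sq_nonneg x])
  have h2 : (√(2 * π))⁻¹ ≤ 1 := by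
    apply inv_le_one_of_one_le₀
    rw [Real.one_le_sqrt]
    nlinarith [Real.pi_gt_three]
  exact mul_le_one₀ h2 (Real.exp_pos _).le h1

theorem gaussianPDFReal_zero_one_pos (x : ℝ) : 0 < gaussianPDFReal 0 1 x :=
  gaussianPDFReal_pos _ _ _ one_ne_zero

theorem hasDerivAt_gaussianPDFReal_zero_one (x : ℝ) :
    HasDerivAt (gaussianPDFReal 0 1) (-x * gaussianPDFReal 0 1 x) x := by
  have h : HasDerivAt (fun x : ℝ => -x ^ 2 / 2) (-x) x := by
    have := ((hasDerivAt_pow 2 x).neg).div_const 2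
    refine (this.congr_deriv ?_).congr_of_eventuallyEq
      (Filter.Eventually.of_forall fun y => by simp)
    simp; ring
  have h2 := (h.exp).const_mul (√(2 * π))⁻¹
  have e : gaussianPDFReal 0 1 = fun x => (√(2 * π))⁻¹ * rexp (-x ^ 2 / 2) :=
    funext gaussianPDFReal_zero_one_apply
  rw [e]
  exact h2.congr_deriv (by ring)

theorem continuous_gaussianPDFReal_zero_one : Continuous (gaussianPDFReal 0 1) :=
  continuous_iff_continuousAt.2 fun x => (hasDerivAt_gaussianPDFReal_zero_one x).continuousAt

theorem Phi_eq_integral (x : ℝ) : Phi x = ∫ u in Iic x, gaussianPDFReal 0 1 u := by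
  simp only [gaussianPDFReal_zero_one_apply, integral_const_mul, Phi]

theorem Phi_eq_real (x : ℝ) : Phi x = (gaussianReal 0 1).real (Iic x) := by
  rw [Phi_eq_integral, Measure.real, gaussianReal_apply_eq_integral _ one_ne_zero,
    ENNReal.toReal_ofReal (integral_nonneg fun _ => gaussianPDFReal_nonneg _ _ _)]

theorem hasDerivAt_Phi (x : ℝ) : HasDerivAt Phi (gaussianPDFReal 0 1 x) x := by
  have hi : ∀ y : ℝ, IntegrableOn (gaussianPDFReal 0 1) (Iic y) := fun y =>
    (integrable_gaussianPDFReal 0 1).integrableOn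
  have e : Phi = fun y => Phi 0 + ∫ u in (0 : ℝ)..y, gaussianPDFReal 0 1 u := by
    funext y
    rw [← intervalIntegral.integral_Iic_sub_Iic (hi 0) (hi y), Phi_eq_integral, Phi_eq_integral]
    ring
  rw [e]
  exact (intervalIntegral.integral_hasDerivAt_right
    (continuous_gaussianPDFReal_zero_one.intervalIntegrable _ _)
    (continuous_gaussianPDFReal_zero_one.stronglyMeasurableAtFilter _ _)
    continuous_gaussianPDFReal_zero_one.continuousAt).const_add _

theorem continuous_Phi : Continuous Phi :=
  continuous_iff_continuousAt.2 fun x => (hasDerivAt_Phi x).continuousAt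

theorem strictMono_Phi : StrictMono Phi :=
  strictMono_of_deriv_pos fun x => by
    rw [(hasDerivAt_Phi x).deriv]; exact gaussianPDFReal_zero_one_pos x

theorem Phi_eq_real_Ici (x : ℝ) : Phi x = (gaussianReal 0 1).real (Ici (-x)) := by
  have h : (gaussianReal 0 1).map (fun y => -y) = gaussianReal 0 1 := by
    rw [gaussianReal_map_neg]; simp
  rw [Phi_eq_real]
  conv_lhs => rw [← h]
  rw [map_measureReal_apply (by fun_prop) measurableSet_Iic]
  congr 1; ext y; simp

theorem Phi_neg (x : ℝ) : Phi (-x) = 1 - Phi x := by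
  have : NullSingletonClass (gaussianReal 0 1) := nullSingletonClass_gaussianReal one_ne_zero
  rw [Phi_eq_real_Ici, Phi_eq_real, ← probReal_compl_eq_one_sub measurableSet_Iic, compl_Iic,
    neg_neg]
  exact measureReal_congr Ioi_ae_eq_Ici.symm

theorem Phi_nonneg (x : ℝ) : 0 ≤ Phi x := by rw [Phi_eq_real]; exact measureReal_nonneg

theorem Phi_pos (x : ℝ) : 0 < Phi x := (Phi_nonneg (x - 1)).trans_lt (strictMono_Phi (by linarith))

theorem Phi_lt_one (x : ℝ) : Phi x < 1 := by
  have := Phi_pos (-x); rw [Phi_neg] at this; linarith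

theorem tendsto_Phi_atTop : Filter.Tendsto Phi Filter.atTop (nhds 1) := by
  have := tendsto_cdf_atTop (gaussianReal 0 1)
  refine this.congr fun x => ?_
  rw [cdf_eq_real, Phi_eq_real]

theorem tendsto_Phi_atBot : Filter.Tendsto Phi Filter.atBot (nhds 0) := by
  have := tendsto_cdf_atBot (gaussianReal 0 1)
  refine this.congr fun x => ?_
  rw [cdf_eq_real, Phi_eq_real]

theorem range_Phi : range Phi = Ioo 0 1 := by
  apply Subset.antisymm
  · rintro _ ⟨x, rfl⟩
    exact ⟨Phi_pos x, Phi_lt_one x⟩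
  · rintro p ⟨h0, h1⟩
    obtain ⟨a, ha⟩ := (tendsto_Phi_atBot.eventually (gt_mem_nhds h0)).exists
    obtain ⟨b, hb⟩ := (tendsto_Phi_atTop.eventually (lt_mem_nhds h1)).exists
    exact mem_range_of_exists_le_of_exists_ge continuous_Phi ⟨a, ha.le⟩ ⟨b, hb.le⟩

theorem PhiInv_Phi (x : ℝ) : PhiInv (Phi x) = x :=
  Function.leftInverse_invFun strictMono_Phi.injective x

theorem Phi_PhiInv {p : ℝ} (hp : p ∈ Ioo (0 : ℝ) 1) : Phi (PhiInv p) = p := by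
  rw [← range_Phi] at hp
  exact Function.invFun_eq hp

theorem continuousAt_PhiInv {p : ℝ} (hp : p ∈ Ioo (0 : ℝ) 1) : ContinuousAt PhiInv p := by
  have himg : PhiInv '' Ioo 0 1 = univ :=
    eq_univ_of_forall fun x => ⟨Phi x, ⟨Phi_pos x, Phi_lt_one x⟩, PhiInv_Phi x⟩
  refine continuousAt_of_monotoneOn_of_image_mem_nhds (s := Ioo 0 1) (fun r hr s hs hrs => ?_)
    (isOpen_Ioo.mem_nhds hp) (himg ▸ Filter.univ_mem)
  rwa [← strictMono_Phi.le_iff_le, Phi_PhiInv hr, Phi_PhiInv hs]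

theorem hasDerivAt_PhiInv {p : ℝ} (hp : p ∈ Ioo (0 : ℝ) 1) :
    HasDerivAt PhiInv (gaussianPDFReal 0 1 (PhiInv p))⁻¹ p :=
  HasDerivAt.of_local_left_inverse (continuousAt_PhiInv hp) (hasDerivAt_Phi _)
    (gaussianPDFReal_zero_one_pos _).ne'
    (Filter.eventually_of_mem (isOpen_Ioo.mem_nhds hp) fun _ hq => Phi_PhiInv hq)

theorem abs_gaussianPDFReal_sub_le (x y : ℝ) :
    |gaussianPDFReal 0 1 x - gaussianPDFReal 0 1 y| ≤ |x - y| := by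
  have hb : ∀ z : ℝ, ‖-z * gaussianPDFReal 0 1 z‖ ≤ 1 := fun z => by
    have h1 : (√(2 * π))⁻¹ ≤ 1 := by
      apply inv_le_one_of_one_le₀
      rw [Real.one_le_sqrt]
      nlinarith [Real.pi_gt_three]
    have h2 : |z| ≤ rexp (z ^ 2 / 2) := by
      have := Real.add_one_le_exp (z ^ 2 / 2)
      nlinarith [sq_nonneg (|z| - 1), sq_abs z]
    have h3 : |z| * rexp (-z ^ 2 / 2) ≤ 1 := by
      rw [neg_div, Real.exp_neg]
      exact mul_inv_le_one_of_le₀ h2 (Real.exp_pos _).le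
    rw [Real.norm_eq_abs, abs_mul, abs_neg, abs_of_pos (gaussianPDFReal_zero_one_pos z),
      gaussianPDFReal_zero_one_apply, mul_left_comm]
    exact mul_le_one₀ h1 (by positivity) h3
  simpa using convex_univ.norm_image_sub_le_of_norm_hasDerivWithin_le (C := 1)
    (fun z _ => (hasDerivAt_gaussianPDFReal_zero_one z).hasDerivWithinAt) (fun z _ => hb z)
    (mem_univ y) (mem_univ x)

/-- The gap at `Phi r` between the Gaussian isoperimetric profile `p ↦ φ (Φ⁻¹ p)` and its tangent
line at `Phi c`. -/
noncomputable def profileGap (c r : ℝ) : ℝ :=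
  gaussianPDFReal 0 1 c - c * (Phi r - Phi c) - gaussianPDFReal 0 1 r

theorem hasDerivAt_profileGap (c r : ℝ) :
    HasDerivAt (profileGap c) ((r - c) * gaussianPDFReal 0 1 r) r := by
  have h := ((((hasDerivAt_Phi r).sub_const (Phi c)).const_mul c).const_sub
    (gaussianPDFReal 0 1 c)).sub (hasDerivAt_gaussianPDFReal_zero_one r)
  exact h.congr_deriv (by ring)

theorem exists_profileGap_eq (c r : ℝ) :
    ∃ ξ, |ξ - c| ≤ |r - c| ∧ profileGap c r = gaussianPDFReal 0 1 ξ / 2 * (r - c) ^ 2 := by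
  have hc : profileGap c c = 0 := by simp [profileGap]
  have hcont : Continuous (profileGap c) :=
    continuous_iff_continuousAt.2 fun x => (hasDerivAt_profileGap c x).continuousAt
  have hq : ∀ x, HasDerivAt (fun x => (x - c) ^ 2) (2 * (x - c)) x := fun x => by
    refine (((hasDerivAt_id x).sub_const c).pow 2).congr_deriv ?_
    simp
  rcases lt_trichotomy c r with h | h | h
  · obtain ⟨ξ, hξ, e⟩ := exists_ratio_hasDerivAt_eq_ratio_slope (profileGap c) _ h
      hcont.continuousOn (fun x _ => hasDerivAt_profileGap c x) (fun x => (x - c) ^ 2) _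
      (by fun_prop) (fun x _ => hq x)
    refine ⟨ξ, ?_, ?_⟩
    · rw [abs_of_pos (by linarith [hξ.1]), abs_of_pos (by linarith)]; linarith [hξ.2]
    · have : ξ - c ≠ 0 := by linarith [hξ.1] |> fun h : 0 < ξ - c => h.ne'
      rw [hc] at e
      apply mul_left_cancel₀ this
      linear_combination -e / 2
  · subst h
    exact ⟨c, le_rfl, by simp [hc]⟩
  · obtain ⟨ξ, hξ, e⟩ := exists_ratio_hasDerivAt_eq_ratio_slope (profileGap c) _ h
      hcont.continuousOn (fun x _ => hasDerivAt_profileGap c x) (fun x => (x - c) ^ 2) _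
      (by fun_prop) (fun x _ => hq x)
    refine ⟨ξ, ?_, ?_⟩
    · rw [abs_of_neg (by linarith [hξ.2]), abs_of_neg (by linarith)]; linarith [hξ.1]
    · have : ξ - c ≠ 0 := sub_ne_zero.2 hξ.2.ne
      rw [hc] at e
      apply mul_left_cancel₀ this
      linear_combination e / 2

theorem profileGap_nonneg (c r : ℝ) : 0 ≤ profileGap c r := by
  obtain ⟨ξ, -, h⟩ := exists_profileGap_eq c r
  rw [h]
  have := gaussianPDFReal_zero_one_pos ξ
  positivity

theorem profileGap_le (c r : ℝ) :
    profileGap c r ≤ (gaussianPDFReal 0 1 c / 2 + |r - c|) * (r - c) ^ 2 := by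
  obtain ⟨ξ, hξ, h⟩ := exists_profileGap_eq c r
  rw [h]
  have := (le_abs_self _).trans (abs_gaussianPDFReal_sub_le ξ c)
  gcongr
  linarith [abs_nonneg (r - c)]

/-- The expectation of `max (g - a) 0` for a standard Gaussian variable `g`. -/
noncomputable def gaussianExcess (a : ℝ) : ℝ := -a * Phi (-a) + gaussianPDFReal 0 1 a

theorem hasDerivAt_gaussianExcess (a : ℝ) : HasDerivAt gaussianExcess (-Phi (-a)) a := by
  have h1 : HasDerivAt (fun a => Phi (-a)) (-gaussianPDFReal 0 1 a) a := by
    have := (hasDerivAt_Phi (-a)).comp a (hasDerivAt_neg a)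
    refine this.congr_deriv ?_
    simp [gaussianPDFReal_zero_one_apply]
  have h2 := ((hasDerivAt_neg a).mul h1).add (hasDerivAt_gaussianPDFReal_zero_one a)
  exact h2.congr_deriv (by ring)

theorem continuous_gaussianExcess : Continuous gaussianExcess :=
  continuous_iff_continuousAt.2 fun x => (hasDerivAt_gaussianExcess x).continuousAt

theorem antitone_gaussianExcess : Antitone gaussianExcess :=
  antitone_of_hasDerivAt_nonpos hasDerivAt_gaussianExcess fun a => by
    simpa using Phi_nonneg (-a)

theorem gaussianExcess_nonneg (a : ℝ) : 0 ≤ gaussianExcess a := by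
  have h : ∀ r, 0 ≤ gaussianPDFReal 0 1 a - a * (Phi r - Phi a) := fun r => by
    have h1 := profileGap_nonneg a r
    have h2 := gaussianPDFReal_zero_one_pos r
    rw [profileGap] at h1
    linarith
  have hl : Filter.Tendsto (fun r => gaussianPDFReal 0 1 a - a * (Phi r - Phi a)) Filter.atTop
      (nhds (gaussianPDFReal 0 1 a - a * (1 - Phi a))) :=
    ((tendsto_Phi_atTop.sub_const _).const_mul _).const_sub _
  have := ge_of_tendsto' hl h
  rw [gaussianExcess, Phi_neg]
  linarith

theorem neg_le_gaussianExcess (a : ℝ) : -a ≤ gaussianExcess a := by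
  have h := gaussianExcess_nonneg (-a)
  have e : gaussianPDFReal 0 1 (-a) = gaussianPDFReal 0 1 a := by
    simp [gaussianPDFReal_zero_one_apply]
  rw [gaussianExcess, e, neg_neg] at h
  rw [gaussianExcess, Phi_neg]
  linarith

theorem gaussianExcess_le (a : ℝ) : gaussianExcess a ≤ |a| + 1 := by
  have h1 := gaussianPDFReal_zero_one_le_one a
  have h2 : -a * Phi (-a) ≤ |a| * 1 :=
    mul_le_mul (neg_le_abs a) (Phi_lt_one _).le (Phi_nonneg _) (abs_nonneg a)
  rw [gaussianExcess]
  linarith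

theorem stdGaussian_real : ProbabilityTheory.stdGaussian ℝ = gaussianReal 0 1 := by
  apply Measure.ext_of_charFun
  ext t
  rw [charFun_stdGaussian, charFun_gaussianReal]
  congr 1
  norm_cast
  simp [neg_div]

section
variable {E : Type*} [NormedAddCommGroup E] [InnerProductSpace ℝ E] [FiniteDimensional ℝ E]
  [MeasurableSpace E] [BorelSpace E]

theorem stdGaussian_prod_map_smul_add_smul {α β κ : ℝ} (h : α ^ 2 + β ^ 2 = κ ^ 2) :
    ((ProbabilityTheory.stdGaussian E).prod (ProbabilityTheory.stdGaussian E)).map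
      (fun p => α • p.1 + β • p.2) = (ProbabilityTheory.stdGaussian E).map (fun x => κ • x) := by
  have e1 : (fun p : E × E => α • p.1 + β • p.2) =
      ⇑(α • ContinuousLinearMap.fst ℝ E E + β • ContinuousLinearMap.snd ℝ E E) := by
    ext p; simp
  have e2 : (fun x : E => κ • x) = ⇑(κ • ContinuousLinearMap.id ℝ E) := by ext p; simp
  rw [e1, e2]
  apply Measure.ext_of_charFunDual
  ext L
  rw [charFunDual_map, charFunDual_map, charFunDual_prod, charFunDual_stdGaussian,
    charFunDual_stdGaussian, charFunDual_stdGaussian, ← Complex.exp_add]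
  have h1 : (L ∘L (α • ContinuousLinearMap.fst ℝ E E + β • ContinuousLinearMap.snd ℝ E E)) ∘L
      ContinuousLinearMap.inl ℝ E E = α • L := by ext; simp
  have h2 : (L ∘L (α • ContinuousLinearMap.fst ℝ E E + β • ContinuousLinearMap.snd ℝ E E)) ∘L
      ContinuousLinearMap.inr ℝ E E = β • L := by ext; simp
  have h3 : L ∘L (κ • ContinuousLinearMap.id ℝ E) = κ • L := by ext; simp
  rw [h1, h2, h3]
  simp only [norm_smul, mul_pow, Real.norm_eq_abs, sq_abs, ← Complex.ofReal_pow,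
    Complex.ofReal_mul, ← h]
  congr 1
  norm_cast
  ring

/-- Resampling the component of a standard Gaussian pair along a unit vector. -/
theorem stdGaussian_prod_map_resample {u : E} {v : ℝ} (huv : ‖u‖ ^ 2 + v ^ 2 = 1) :
    ((((ProbabilityTheory.stdGaussian E).prod (gaussianReal 0 1)).prod (gaussianReal 0 1)).map
      (fun p => (p.1.1 + (p.2 - (⟪u, p.1.1⟫ + v * p.1.2)) • u,
        p.1.2 + (p.2 - (⟪u, p.1.1⟫ + v * p.1.2)) * v))) =
      (ProbabilityTheory.stdGaussian E).prod (gaussianReal 0 1) := by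
  rw [← stdGaussian_real]
  set A : (E × ℝ) × ℝ →L[ℝ] ℝ := ContinuousLinearMap.snd ℝ (E × ℝ) ℝ -
    ((innerSL ℝ u).coprod (v • ContinuousLinearMap.id ℝ ℝ)) ∘L ContinuousLinearMap.fst ℝ (E × ℝ) ℝ
    with hA
  set T : (E × ℝ) × ℝ →L[ℝ] E × ℝ :=
    ContinuousLinearMap.fst ℝ (E × ℝ) ℝ + A.smulRight (u, v) with hT
  have e1 : (fun p : (E × ℝ) × ℝ => (p.1.1 + (p.2 - (⟪u, p.1.1⟫ + v * p.1.2)) • u,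
        p.1.2 + (p.2 - (⟪u, p.1.1⟫ + v * p.1.2)) * v)) = ⇑T := by
    ext p <;> simp [hT, hA]
  rw [e1]
  apply Measure.ext_of_charFunDual
  ext L
  obtain ⟨t, ht⟩ : ∃ t : E, ∀ x, L (x, 0) = ⟪t, x⟫ := by
    refine ⟨(InnerProductSpace.toDual ℝ E).symm (L ∘L ContinuousLinearMap.inl ℝ E ℝ), fun x => ?_⟩
    rw [InnerProductSpace.toDual_symm_apply]; simp
  obtain ⟨s, hs⟩ : ∃ s : ℝ, ∀ y, L (0, y) = s * y := by
    refine ⟨L (0, 1), fun y => ?_⟩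
    have : ((0 : E), y) = y • ((0 : E), (1 : ℝ)) := by simp
    rw [this, map_smul, smul_eq_mul, mul_comm]
  have hL : ∀ x y, L (x, y) = ⟪t, x⟫ + s * y := fun x y => by
    rw [← ht, ← hs, ← map_add]; simp
  have hr : ∀ M : ℝ →L[ℝ] ℝ, ‖M‖ ^ 2 = (M 1) ^ 2 := fun M => by
    have h1 : M = ContinuousLinearMap.toSpanSingleton ℝ (M 1) := by ext; simp
    conv_lhs => rw [h1, ContinuousLinearMap.norm_toSpanSingleton, Real.norm_eq_abs, sq_abs]
  have n1 : ((L ∘L T) ∘L ContinuousLinearMap.inl ℝ (E × ℝ) ℝ) ∘L ContinuousLinearMap.inl ℝ E ℝ =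
      innerSL ℝ (t - (⟪t, u⟫ + s * v) • u) := by
    ext x
    simp [hT, hA, hL, inner_smul_right]
    ring
  have n1' : L ∘L ContinuousLinearMap.inl ℝ E ℝ = innerSL ℝ t := by
    ext x; simp [hL]
  rw [charFunDual_map, charFunDual_prod, charFunDual_prod, charFunDual_prod,
    charFunDual_stdGaussian,
    charFunDual_stdGaussian, charFunDual_stdGaussian, charFunDual_stdGaussian,
    charFunDual_stdGaussian, ← Complex.exp_add, ← Complex.exp_add, ← Complex.exp_add, n1, n1']
  simp only [← Complex.ofReal_pow, hr, innerSL_apply_norm]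
  congr 1
  norm_cast
  rw [norm_sub_sq_real, inner_smul_right, norm_smul, mul_pow, Real.norm_eq_abs, sq_abs]
  simp [hT, hA, hL, inner_smul_right]
  have : ‖u‖ ^ 2 = 1 - v ^ 2 := by linarith
  rw [this]
  ring
end

theorem integral_gaussianReal_comp_add (f : ℝ → ℝ) (r : ℝ) :
    ∫ x, f (x + r) ∂(gaussianReal 0 1) = ∫ x, gaussianPDFReal 0 1 (x - r) * f x := by
  rw [integral_gaussianReal_eq_integral_smul one_ne_zero,
    ← integral_add_right_eq_self (fun x => gaussianPDFReal 0 1 (x - r) * f x) r]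
  simp

/-- Among test functions of given Gaussian mean, half-line indicators gain most from a shift. -/
theorem integral_gaussianReal_comp_add_le {f : ℝ → ℝ} (hf : Measurable f) (h0 : ∀ x, 0 ≤ f x)
    (h1 : ∀ x, f x ≤ 1) {b r : ℝ} (hr : 0 ≤ r) (hb : ∫ x, f x ∂(gaussianReal 0 1) = Phi b) :
    ∫ x, f (x + r) ∂(gaussianReal 0 1) ≤ Phi (b + r) := by
  set s : ℝ → ℝ := (Ici (-b)).indicator 1 with hs
  have hsm : Measurable s := measurable_one.indicator measurableSet_Ici
  have hsb : ∫ x, s x ∂(gaussianReal 0 1) = Phi b := by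
    rw [hs, integral_indicator_one measurableSet_Ici, Phi_eq_real_Ici]
  have hsr : ∫ x, s (x + r) ∂(gaussianReal 0 1) = Phi (b + r) := by
    have : (fun x => s (x + r)) = (Ici (-(b + r))).indicator 1 := by
      ext x
      simp only [hs, indicator, mem_Ici, Pi.one_apply]
      congr 1
      exact propext ⟨fun h => by linarith, fun h => by linarith⟩
    rw [this, integral_indicator_one measurableSet_Ici, Phi_eq_real_Ici]
  have hs0 : ∀ x, 0 ≤ s x := fun x => indicator_nonneg (fun _ _ => zero_le_one) x
  have hs1 : ∀ x, s x ≤ 1 := fun x => indicator_le_self' (fun _ _ => zero_le_one) x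
  have hi : ∀ (g : ℝ → ℝ), Measurable g → (∀ x, 0 ≤ g x) → (∀ x, g x ≤ 1) → ∀ t,
      Integrable (fun x => gaussianPDFReal 0 1 (x - t) * g x) := fun g hg g0 g1 t =>
    ((integrable_gaussianPDFReal 0 1).comp_sub_right t).mul_bdd (c := 1) hg.aestronglyMeasurable
      (Filter.Eventually.of_forall fun x => by
        rw [Real.norm_eq_abs, abs_of_nonneg (g0 x)]; exact g1 x)
  set k := gaussianPDFReal 0 1 (-b - r) / gaussianPDFReal 0 1 (-b) with hk
  have hp := gaussianPDFReal_zero_one_pos (-b)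
  have hexp : ∀ x y x' y' : ℝ, x ^ 2 + y ^ 2 ≤ x' ^ 2 + y' ^ 2 →
      gaussianPDFReal 0 1 x' * gaussianPDFReal 0 1 y' ≤
        gaussianPDFReal 0 1 x * gaussianPDFReal 0 1 y := fun x y x' y' h => by
    simp only [gaussianPDFReal_zero_one_apply]
    rw [mul_mul_mul_comm, mul_mul_mul_comm _ (rexp (-x ^ 2 / 2)), ← Real.exp_add, ← Real.exp_add]
    exact mul_le_mul_of_nonneg_left (Real.exp_le_exp.2 (by linarith)) (by positivity)
  have hpt : ∀ x, gaussianPDFReal 0 1 (x - r) * f x - gaussianPDFReal 0 1 (x - r) * s x ≤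
      k * (gaussianPDFReal 0 1 (x - 0) * f x - gaussianPDFReal 0 1 (x - 0) * s x) := fun x => by
    rw [sub_zero]
    by_cases hx : -b ≤ x
    · have hsx : s x = 1 := by simp [hs, hx]
      have : k * gaussianPDFReal 0 1 x ≤ gaussianPDFReal 0 1 (x - r) := by
        rw [hk, div_mul_eq_mul_div, div_le_iff₀ hp]
        exact hexp _ _ _ _ (by nlinarith)
      rw [hsx]
      nlinarith [h1 x]
    · have hsx : s x = 0 := by simp [hs, hx]
      have : gaussianPDFReal 0 1 (x - r) ≤ k * gaussianPDFReal 0 1 x := by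
        rw [hk, div_mul_eq_mul_div, le_div_iff₀ hp]
        exact hexp _ _ _ _ (by nlinarith)
      rw [hsx]
      nlinarith [h0 x]
  have hint := integral_mono ((hi f hf h0 h1 r).sub (hi s hsm hs0 hs1 r))
    (((hi f hf h0 h1 0).sub (hi s hsm hs0 hs1 0)).const_mul k) hpt
  simp only [Pi.sub_apply] at hint
  rw [integral_const_mul, integral_sub (hi f hf h0 h1 r) (hi s hsm hs0 hs1 r),
    integral_sub (hi f hf h0 h1 0) (hi s hsm hs0 hs1 0)] at hint
  simp only [← integral_gaussianReal_comp_add, add_zero] at hint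
  rw [hb, hsb, hsr] at hint
  linarith

section
variable {E : Type*} [NormedAddCommGroup E] [InnerProductSpace ℝ E] [FiniteDimensional ℝ E]
  [MeasurableSpace E] [BorelSpace E]

theorem measureReal_stdGaussian_prod_preimage_add_le {S : Set (E × ℝ)} (hS : MeasurableSet S)
    {b : ℝ} (hb : ((ProbabilityTheory.stdGaussian E).prod (gaussianReal 0 1)).real S = Phi b)
    (θ : E) (η : ℝ) :
    ((ProbabilityTheory.stdGaussian E).prod (gaussianReal 0 1)).real
      ((fun z => z + (θ, η)) ⁻¹' S) ≤ Phi (b + √(‖θ‖ ^ 2 + η ^ 2)) := by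
  set μ := (ProbabilityTheory.stdGaussian E).prod (gaussianReal 0 1) with hμ
  set r := √(‖θ‖ ^ 2 + η ^ 2) with hr
  have hr2 : r ^ 2 = ‖θ‖ ^ 2 + η ^ 2 := Real.sq_sqrt (by positivity)
  rcases (Real.sqrt_nonneg (‖θ‖ ^ 2 + η ^ 2)).eq_or_lt with h | hpos
  · rw [← hr] at h
    have h1 : ‖θ‖ = 0 := by nlinarith [sq_nonneg η, norm_nonneg θ]
    have h2 : η = 0 := by nlinarith [sq_nonneg η, norm_nonneg θ]
    rw [norm_eq_zero] at h1
    have h3 : (fun z : E × ℝ => z + (θ, η)) ⁻¹' S = S := by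
      ext z; rw [h1, h2, mem_preimage, Prod.mk_zero_zero, add_zero]
    rw [h3, hb, ← h, add_zero]
  rw [← hr] at hpos
  set u : E := r⁻¹ • θ with hu
  set v : ℝ := r⁻¹ * η with hv
  have huv : ‖u‖ ^ 2 + v ^ 2 = 1 := by
    rw [hu, hv, norm_smul, mul_pow, mul_pow, Real.norm_eq_abs, sq_abs, ← mul_add, ← hr2]
    field_simp
  set T : (E × ℝ) × ℝ → E × ℝ := fun p => (p.1.1 + (p.2 - (⟪u, p.1.1⟫ + v * p.1.2)) • u,
        p.1.2 + (p.2 - (⟪u, p.1.1⟫ + v * p.1.2)) * v) with hT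
  have hTm : Measurable T := by
    have : Continuous T := by fun_prop
    exact this.measurable
  have hmap : (μ.prod (gaussianReal 0 1)).map T = μ := stdGaussian_prod_map_resample huv
  have hTadd : ∀ z ξ, T (z, ξ) + (θ, η) = T (z, ξ + r) := fun z ξ => by
    have e1 : θ = r • u := by rw [hu, smul_inv_smul₀ hpos.ne']
    have e2 : η = r * v := by rw [hv, mul_inv_cancel_left₀ hpos.ne']
    ext
    · simp only [hT, Prod.fst_add]
      conv_lhs => rw [e1]
      module
    · simp only [hT, Prod.snd_add]
      conv_lhs => rw [e2]
      ring
  set f : ℝ → ℝ := fun ξ => μ.real {z | T (z, ξ) ∈ S} with hf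
  have hfm : Measurable f :=
    (measurable_measure_prodMk_right (μ := μ) (hTm hS)).ennreal_toReal
  have key : ∀ A : Set ((E × ℝ) × ℝ), MeasurableSet A →
      (μ.prod (gaussianReal 0 1)).real A = ∫ ξ, μ.real {z | (z, ξ) ∈ A} ∂(gaussianReal 0 1) := by
    intro A hA
    have hi : Integrable (A.indicator (1 : (E × ℝ) × ℝ → ℝ)) (μ.prod (gaussianReal 0 1)) :=
      (integrable_const (1 : ℝ)).indicator hA
    rw [← integral_indicator_one hA, integral_prod_symm _ hi]
    congr 1
    ext ξ
    have : (fun z => A.indicator (1 : (E × ℝ) × ℝ → ℝ) (z, ξ)) =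
        {z | (z, ξ) ∈ A}.indicator 1 := by
      ext z; simp [indicator]
    rw [this]
    exact integral_indicator_one (s := {z | (z, ξ) ∈ A}) (measurable_prodMk_right hA)
  have h1 : ∫ ξ, f ξ ∂(gaussianReal 0 1) = Phi b := by
    rw [← hb, ← hmap, map_measureReal_apply hTm hS, key _ (hTm hS)]
    simp [hf]
  have h2 : ∫ ξ, f (ξ + r) ∂(gaussianReal 0 1) = μ.real ((fun z => z + (θ, η)) ⁻¹' S) := by
    have hS' : MeasurableSet ((fun z : E × ℝ => z + (θ, η)) ⁻¹' S) :=
      (measurable_add_const _) hS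
    conv_rhs => rw [← hmap]
    rw [map_measureReal_apply hTm hS', key _ (hTm hS')]
    simp only [hf, mem_preimage, hTadd]
  rw [← h2]
  exact integral_gaussianReal_comp_add_le hfm (fun _ => measureReal_nonneg)
    (fun _ => measureReal_le_one) hpos.le h1

theorem integral_Phi_comp_add_le {F : E → ℝ} (hF : Continuous F) {b : ℝ}
    (hb : ∫ x, Phi (F x) ∂(ProbabilityTheory.stdGaussian E) = Phi b) (θ : E) (η : ℝ) :
    ∫ x, Phi (F (x + θ) + η) ∂(ProbabilityTheory.stdGaussian E) ≤
      Phi (b + √(‖θ‖ ^ 2 + η ^ 2)) := by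
  have key : ∀ G : E → ℝ, Continuous G → ∫ x, Phi (G x) ∂(ProbabilityTheory.stdGaussian E) =
      ((ProbabilityTheory.stdGaussian E).prod (gaussianReal 0 1)).real {z | z.2 ≤ G z.1} := by
    intro G hG
    have hm : MeasurableSet {z : E × ℝ | z.2 ≤ G z.1} :=
      (isClosed_le continuous_snd (hG.comp continuous_fst)).measurableSet
    have hi : Integrable ({z : E × ℝ | z.2 ≤ G z.1}.indicator (1 : E × ℝ → ℝ))
        ((ProbabilityTheory.stdGaussian E).prod (gaussianReal 0 1)) :=
      (integrable_const (1 : ℝ)).indicator hm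
    rw [← integral_indicator_one hm, integral_prod _ hi]
    congr 1
    ext x
    have : (fun y => {z : E × ℝ | z.2 ≤ G z.1}.indicator (1 : E × ℝ → ℝ) (x, y)) =
        (Iic (G x)).indicator 1 := by
      ext y; simp [indicator]
    rw [this, integral_indicator_one measurableSet_Iic, Phi_eq_real]
  have hm : MeasurableSet {z : E × ℝ | z.2 ≤ F z.1} :=
    (isClosed_le continuous_snd (hF.comp continuous_fst)).measurableSet
  rw [key F hF] at hb
  have := measureReal_stdGaussian_prod_preimage_add_le hm hb θ (-η)
  rw [neg_sq] at this
  rw [key _ (by fun_prop)]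
  refine le_of_eq_of_le (congrArg _ ?_) this
  ext z
  simp [← sub_eq_add_neg]
theorem integral_mem_Ioo_of_forall_mem {α : Type*} [MeasurableSpace α] {μ : Measure α}
    [IsProbabilityMeasure μ] {f : α → ℝ} (hf : Integrable f μ) (h : ∀ x, f x ∈ Ioo (0 : ℝ) 1) :
    ∫ x, f x ∂μ ∈ Ioo (0 : ℝ) 1 := by
  have pos : ∀ g : α → ℝ, Integrable g μ → (∀ x, 0 < g x) → 0 < ∫ x, g x ∂μ := fun g hg h => by
    rw [integral_pos_iff_support_of_nonneg (fun x => (h x).le) hg]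
    have : Function.support g = univ := by ext x; simp [(h x).ne']
    simp [this]
  refine ⟨pos f hf fun x => (h x).1, ?_⟩
  have := pos (fun x => 1 - f x) ((integrable_const 1).sub hf) fun x => by linarith [(h x).2]
  rw [integral_sub (integrable_const 1) hf] at this
  simp at this
  exact this

theorem integrable_of_continuous_of_abs_le {X : Type*} [TopologicalSpace X] [MeasurableSpace X]
    [OpensMeasurableSpace X] {μ : Measure X} [IsFiniteMeasure μ]
    {f : X → ℝ} (hf : Continuous f) {C : ℝ} (hC : ∀ x, |f x| ≤ C) : Integrable f μ :=
  Integrable.of_bound hf.measurable.aestronglyMeasurable C (Filter.Eventually.of_forall hC)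

theorem abs_Phi_le_one (x : ℝ) : |Phi x| ≤ 1 := by
  rw [abs_of_nonneg (Phi_nonneg x)]; exact (Phi_lt_one x).le

theorem integral_Phi_mem_Ioo {X : Type*} [TopologicalSpace X] [MeasurableSpace X]
    [OpensMeasurableSpace X] {μ : Measure X} [IsProbabilityMeasure μ] {w : X → ℝ}
    (hw : Continuous w) : ∫ x, Phi (w x) ∂μ ∈ Ioo (0 : ℝ) 1 :=
  integral_mem_Ioo_of_forall_mem
    (integrable_of_continuous_of_abs_le (continuous_Phi.comp hw) fun _ => abs_Phi_le_one _)
    fun _ => ⟨Phi_pos _, Phi_lt_one _⟩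

theorem integral_integral_stdGaussian_smul_add_smul {F : E → ℝ} (hF : Continuous F) {C : ℝ}
    (hC : ∀ x, |F x| ≤ C) {α β κ : ℝ} (h : α ^ 2 + β ^ 2 = κ ^ 2) :
    ∫ x, ∫ y, F (α • x + β • y) ∂(ProbabilityTheory.stdGaussian E)
      ∂(ProbabilityTheory.stdGaussian E) =
    ∫ x, F (κ • x) ∂(ProbabilityTheory.stdGaussian E) := by
  rw [← integral_map (φ := fun x : E => κ • x) (by fun_prop)
      hF.measurable.aestronglyMeasurable, ← stdGaussian_prod_map_smul_add_smul h,
    integral_map (by fun_prop) hF.measurable.aestronglyMeasurable,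
    integral_prod _ (integrable_of_continuous_of_abs_le (by fun_prop) fun _ => hC _)]

/-- The Ornstein–Uhlenbeck (Mehler) average of `f` with correlation `c`. -/
noncomputable def mehler (c : ℝ) (f : E → ℝ) (x : E) : ℝ :=
  ∫ g, f (c • x + √(1 - c ^ 2) • g) ∂(ProbabilityTheory.stdGaussian E)

theorem continuous_mehler {f : E → ℝ} (hf : Continuous f) {C : ℝ} (hC : ∀ x, |f x| ≤ C) :
    Continuous fun p : ℝ × E => mehler p.1 f p.2 := by
  unfold mehler
  refine continuous_of_dominated (bound := fun _ => C) (fun p => ?_)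
    (fun p => Filter.Eventually.of_forall fun g => hC _) (integrable_const C)
    (Filter.Eventually.of_forall fun g => by fun_prop)
  exact Continuous.aestronglyMeasurable (by fun_prop)

theorem mehler_mehler {f : E → ℝ} (hf : Continuous f) {C : ℝ} (hC : ∀ x, |f x| ≤ C) {c c' : ℝ}
    (hc : c ∈ Icc (0 : ℝ) 1) (hc' : c' ∈ Icc (0 : ℝ) 1) (x : E) :
    mehler c' (mehler c f) x = mehler (c * c') f x := by
  unfold mehler
  have hs : ∀ c ∈ Icc (0 : ℝ) 1, √(1 - c ^ 2) ^ 2 = 1 - c ^ 2 := fun c hc =>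
    Real.sq_sqrt (by nlinarith [hc.1, hc.2])
  have h : (c * √(1 - c' ^ 2)) ^ 2 + √(1 - c ^ 2) ^ 2 = √(1 - (c * c') ^ 2) ^ 2 := by
    rw [mul_pow, hs c hc, hs c' hc', hs (c * c') ⟨mul_nonneg hc.1 hc'.1,
      mul_le_one₀ hc.2 hc'.1 hc'.2⟩]
    ring
  have := integral_integral_stdGaussian_smul_add_smul
    (F := fun y => f ((c * c') • x + y)) (by fun_prop) (fun _ => hC _) h
  rw [← this]
  congr 1; ext g; congr 1; ext g'; congr 1
  module

theorem integral_mehler {f : E → ℝ} (hf : Continuous f) {C : ℝ} (hC : ∀ x, |f x| ≤ C) {c : ℝ}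
    (hc : c ∈ Icc (0 : ℝ) 1) :
    ∫ x, mehler c f x ∂(ProbabilityTheory.stdGaussian E) =
      ∫ x, f x ∂(ProbabilityTheory.stdGaussian E) := by
  unfold mehler
  rw [integral_integral_stdGaussian_smul_add_smul hf hC (κ := 1)]
  · simp
  · rw [Real.sq_sqrt (by nlinarith [hc.1, hc.2])]; ring

/-- The Mehler average of `w` computed on the probit scale. -/
noncomputable def probitMehler (c : ℝ) (w : E → ℝ) (x : E) : ℝ :=
  PhiInv (mehler c (fun y => Phi (w y)) x)

theorem mehler_Phi_mem_Ioo {w : E → ℝ} (hw : Continuous w) (c : ℝ) (x : E) :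
    mehler c (fun y => Phi (w y)) x ∈ Ioo (0 : ℝ) 1 :=
  integral_Phi_mem_Ioo (w := fun g => w (c • x + √(1 - c ^ 2) • g)) (by fun_prop)

theorem Phi_probitMehler {w : E → ℝ} (hw : Continuous w) (c : ℝ) (x : E) :
    Phi (probitMehler c w x) = mehler c (fun y => Phi (w y)) x :=
  Phi_PhiInv (mehler_Phi_mem_Ioo hw c x)

theorem continuous_probitMehler {w : E → ℝ} (hw : Continuous w) :
    Continuous fun p : ℝ × E => probitMehler p.1 w p.2 := by
  refine continuous_iff_continuousAt.2 fun p => ?_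
  exact ContinuousAt.comp (f := fun p : ℝ × E => mehler p.1 (fun y => Phi (w y)) p.2)
    (continuousAt_PhiInv (mehler_Phi_mem_Ioo hw p.1 p.2))
    (continuous_mehler (continuous_Phi.comp hw) fun _ => abs_Phi_le_one _).continuousAt

theorem probitMehler_one (w : E → ℝ) : probitMehler 1 w = w := by
  ext x; simp [probitMehler, mehler, PhiInv_Phi]

theorem Phi_probitMehler_mul {w : E → ℝ} (hw : Continuous w) {c c' : ℝ}
    (hc : c ∈ Icc (0 : ℝ) 1) (hc' : c' ∈ Icc (0 : ℝ) 1) (x : E) :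
    Phi (probitMehler (c * c') w x) = mehler c' (fun y => Phi (probitMehler c w y)) x := by
  simp only [Phi_probitMehler hw]
  exact (mehler_mehler (continuous_Phi.comp hw) (fun _ => abs_Phi_le_one _) hc hc' x).symm

/-- On the probit scale, the Mehler average improves Lipschitz constants. -/
theorem probitMehler_le_add {w : E → ℝ} (hw : Continuous w) {l : ℝ} (hl : 0 ≤ l)
    (hwl : ∀ x y, w y ≤ w x + l * ‖y - x‖) {c : ℝ} (hc : c ∈ Icc (0 : ℝ) 1) (x y : E) :
    probitMehler c w y ≤ probitMehler c w x +
      l * c / √(1 + l ^ 2 * (1 - c ^ 2)) * ‖y - x‖ := by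
  set σ := √(1 - c ^ 2) with hσ
  have hσ2 : σ ^ 2 = 1 - c ^ 2 := Real.sq_sqrt (by nlinarith [hc.1, hc.2])
  rw [← hσ2]
  set q := 1 + l ^ 2 * σ ^ 2 with hq
  have hq0 : 0 < q := by positivity
  set δ := y - x with hδ
  have key := integral_Phi_comp_add_le (F := fun g => w (c • x + σ • g)) (by fun_prop)
    (Phi_probitMehler hw c x).symm ((l ^ 2 * σ * c / q) • δ) (l * c * ‖δ‖ / q)
  have e : √(‖(l ^ 2 * σ * c / q) • δ‖ ^ 2 + (l * c * ‖δ‖ / q) ^ 2) = l * c / √q * ‖δ‖ := by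
    rw [Real.sqrt_eq_iff_mul_self_eq (by positivity)
      (by have := hc.1; positivity), norm_smul, mul_pow, Real.norm_eq_abs, sq_abs]
    have : √q * √q = q := Real.mul_self_sqrt hq0.le
    rw [mul_mul_mul_comm, div_mul_div_comm, this]
    field_simp
    rw [hq]
    ring
  rw [e] at key
  rw [← strictMono_Phi.le_iff_le]
  refine le_trans ?_ key
  rw [Phi_probitMehler hw, mehler]
  refine integral_mono
    (integrable_of_continuous_of_abs_le
      (continuous_Phi.comp (by fun_prop)) fun _ => abs_Phi_le_one _)
    (integrable_of_continuous_of_abs_le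
      (continuous_Phi.comp (by fun_prop)) fun _ => abs_Phi_le_one _) fun g => ?_
  refine strictMono_Phi.monotone ?_
  refine (hwl _ (c • y + σ • g)).trans (add_le_add_right ?_ _)
  have e2 : c • y + σ • g - (c • x + σ • (g + (l ^ 2 * σ * c / q) • δ)) = (c / q) • δ := by
    have : c = c / q + σ * (l ^ 2 * σ * c / q) := by field_simp; rw [hq]; ring
    have e3 : c • y + σ • g - (c • x + σ • (g + (l ^ 2 * σ * c / q) • δ)) =
      c • δ - (σ * (l ^ 2 * σ * c / q)) • δ := by rw [hδ]; module
    rw [e3, ← sub_smul]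
    congr 1
    linarith
  rw [e2, norm_smul, Real.norm_eq_abs, abs_of_nonneg (div_nonneg hc.1 hq0.le)]
  exact le_of_eq (by ring)
end

theorem pi_absolutelyContinuous {μ ν : Measure ℝ} [SigmaFinite μ] [SigmaFinite ν] (h : μ ≪ ν) :
    ∀ n : ℕ, Measure.pi (fun _ : Fin n => μ) ≪ Measure.pi (fun _ : Fin n => ν)
  | 0 => by rw [Measure.pi_of_empty, Measure.pi_of_empty]
  | n + 1 => by
    rw [← ((measurePreserving_piFinSuccAbove (fun _ : Fin (n + 1) => μ) 0).symm).map_eq,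
      ← ((measurePreserving_piFinSuccAbove (fun _ : Fin (n + 1) => ν) 0).symm).map_eq]
    exact (h.prod (pi_absolutelyContinuous h n)).map (MeasurableEquiv.measurable _)

section
variable {E : Type*} [NormedAddCommGroup E] [InnerProductSpace ℝ E]

/-- The Ornstein–Uhlenbeck path from `p.1` in direction `p.2`, at time `t`. -/
noncomputable def ouStep (t : ℝ) (p : E × E) : E :=
  rexp (-t) • p.1 + √(1 - rexp (-t) ^ 2) • p.2

theorem continuous_ouStep : Continuous fun q : ℝ × (E × E) => ouStep q.1 q.2 := by
  unfold ouStep; fun_prop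

theorem norm_ouStep_sub_le {t : ℝ} (ht : t ∈ Icc (0 : ℝ) 1) (p : E × E) :
    ‖ouStep t p - p.1‖ ≤ 3 * √t * ‖p‖ := by
  have e : ouStep t p - p.1 = (rexp (-t) - 1) • p.1 + √(1 - rexp (-t) ^ 2) • p.2 := by
    rw [ouStep]; module
  have h1 : 1 - t ≤ rexp (-t) := by linarith [Real.add_one_le_exp (-t)]
  have h1' : rexp (-t) ≤ 1 := Real.exp_le_one_iff.2 (by linarith [ht.1])
  have h2 : t ≤ √t := Real.le_sqrt_of_sq_le (by nlinarith [ht.1, ht.2])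
  have h3 : √(1 - rexp (-t) ^ 2) ≤ 2 * √t := by
    refine Real.sqrt_le_iff.2 ⟨by positivity, ?_⟩
    rw [mul_pow, Real.sq_sqrt ht.1]
    nlinarith [Real.exp_pos (-t), ht.1]
  have n1 : ‖p.1‖ ≤ ‖p‖ := norm_fst_le p
  have n2 : ‖p.2‖ ≤ ‖p‖ := norm_snd_le p
  rw [e]
  refine (norm_add_le _ _).trans ?_
  rw [norm_smul, norm_smul, Real.norm_eq_abs, Real.norm_eq_abs,
    abs_of_nonneg (Real.sqrt_nonneg _), abs_of_nonpos (by linarith)]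
  calc -(rexp (-t) - 1) * ‖p.1‖ + √(1 - rexp (-t) ^ 2) * ‖p.2‖
      ≤ √t * ‖p‖ + 2 * √t * ‖p‖ := by gcongr; linarith
    _ = _ := by ring

theorem tendsto_smul_ouStep_sub (p : E × E) :
    Filter.Tendsto (fun t => (√t)⁻¹ • (ouStep t p - p.1)) (nhdsWithin 0 (Ioi 0))
      (nhds (√2 • p.2)) := by
  have hd : HasDerivAt (fun t : ℝ => 1 - rexp (-t) ^ 2) 2 0 := by
    have := (((hasDerivAt_id (0 : ℝ)).neg.exp).pow 2).const_sub 1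
    simpa using this
  have hd' : HasDerivAt (fun t : ℝ => rexp (-t)) (-1) 0 := by
    have := ((hasDerivAt_id (0 : ℝ)).neg.exp)
    simpa using this
  have t1 : Filter.Tendsto (fun t : ℝ => t⁻¹ * (1 - rexp (-t) ^ 2)) (nhdsWithin 0 (Ioi 0))
      (nhds 2) := by
    have := (hasDerivWithinAt_iff_tendsto_slope' (by simp)).1 (hd.hasDerivWithinAt (s := Ioi 0))
    refine this.congr fun t => ?_
    simp [slope_def_field, div_eq_inv_mul]
  have t2 : Filter.Tendsto (fun t : ℝ => t⁻¹ * (rexp (-t) - 1)) (nhdsWithin 0 (Ioi 0))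
      (nhds (-1)) := by
    have := (hasDerivWithinAt_iff_tendsto_slope' (by simp)).1 (hd'.hasDerivWithinAt (s := Ioi 0))
    refine this.congr fun t => ?_
    simp [slope_def_field, div_eq_inv_mul]
  have t3 : Filter.Tendsto (fun t : ℝ => √t) (nhdsWithin 0 (Ioi 0)) (nhds 0) := by
    have := (Real.continuous_sqrt.tendsto 0).mono_left
      (nhdsWithin_le_nhds (s := Ioi (0 : ℝ)))
    rwa [Real.sqrt_zero] at this
  have t4 := ((t3.mul t2).smul_const p.1).add
    (((Real.continuous_sqrt.tendsto 2).comp t1).smul_const p.2)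
  simp only [zero_mul, zero_smul, zero_add] at t4
  refine t4.congr' ?_
  filter_upwards [self_mem_nhdsWithin] with t ht
  have ht' : (0 : ℝ) < t := ht
  have e1 : √t * (t⁻¹ * (rexp (-t) - 1)) = (√t)⁻¹ * (rexp (-t) - 1) := by
    rw [← mul_assoc, ← div_eq_mul_inv, Real.sqrt_div_self]
  rw [e1, Function.comp_apply, Real.sqrt_mul (by positivity), Real.sqrt_inv, ouStep]
  module

/-- The second-order bound on the profile gap along the Ornstein–Uhlenbeck path. -/
noncomputable def ouIncrement (h : E → ℝ) (t : ℝ) (p : E × E) : ℝ :=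
  (gaussianPDFReal 0 1 (h p.1) / 2 + |h (ouStep t p) - h p.1|) * (h (ouStep t p) - h p.1) ^ 2

theorem ouIncrement_nonneg (h : E → ℝ) (t : ℝ) (p : E × E) : 0 ≤ ouIncrement h t p := by
  have := (gaussianPDFReal_zero_one_pos (h p.1)).le
  unfold ouIncrement
  positivity

theorem continuous_ouIncrement {h : E → ℝ} (hc : Continuous h) (t : ℝ) :
    Continuous (ouIncrement h t) := by
  have hφ := continuous_gaussianPDFReal_zero_one
  have : Continuous (fun p : E × E => ouStep t p) :=
    continuous_ouStep.comp (Continuous.prodMk_right t)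
  unfold ouIncrement
  fun_prop

theorem ouIncrement_le {h : E → ℝ} {L : NNReal} (hh : LipschitzWith L h) {t : ℝ}
    (ht : t ∈ Icc (0 : ℝ) 1) (p : E × E) :
    ouIncrement h t p ≤ (1 / 2 + 3 * L * ‖p‖) * (9 * L ^ 2 * ‖p‖ ^ 2) * t := by
  have h1 : |h (ouStep t p) - h p.1| ≤ 3 * L * √t * ‖p‖ := by
    have := hh.dist_le_mul (ouStep t p) p.1
    rw [Real.dist_eq, dist_eq_norm] at this
    have h2 := mul_le_mul_of_nonneg_left (norm_ouStep_sub_le ht p) (NNReal.coe_nonneg L)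
    exact (this.trans h2).trans (le_of_eq (by ring))
  have hs1 : √t ≤ 1 := Real.sqrt_le_one.2 ht.2
  have h2 : |h (ouStep t p) - h p.1| ≤ 3 * L * ‖p‖ := by
    refine h1.trans ?_
    have : 3 * (L : ℝ) * √t ≤ 3 * L * 1 := by gcongr
    nlinarith [norm_nonneg p]
  have h3 : (h (ouStep t p) - h p.1) ^ 2 ≤ 9 * L ^ 2 * ‖p‖ ^ 2 * t := by
    rw [← sq_abs]
    refine (pow_le_pow_left₀ (abs_nonneg _) h1 2).trans (le_of_eq ?_)
    rw [mul_pow, mul_pow, Real.sq_sqrt ht.1]; ring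
  have hφ1 := gaussianPDFReal_zero_one_le_one (h p.1)
  rw [mul_assoc, ouIncrement]
  gcongr

end

section
variable {E : Type*} [NormedAddCommGroup E] [InnerProductSpace ℝ E] [FiniteDimensional ℝ E]
  [MeasurableSpace E] [BorelSpace E]

theorem stdGaussian_absolutelyContinuous :
    ProbabilityTheory.stdGaussian E ≪ (volume : Measure E) := by
  set b := stdOrthonormalBasis ℝ E
  have e : (fun x : Fin (Module.finrank ℝ E) → ℝ => ∑ i, x i • b i) =
      fun x => b.repr.symm (WithLp.toLp 2 x) := by
    ext x; rw [OrthonormalBasis.sum_repr_symm]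
  have h : MeasurePreserving (fun x : Fin (Module.finrank ℝ E) → ℝ => ∑ i, x i • b i) := by
    rw [e]
    exact b.measurePreserving_repr_symm.comp (PiLp.volume_preserving_toLp _)
  rw [ProbabilityTheory.stdGaussian, ← h.map_eq]
  refine Measure.AbsolutelyContinuous.map ?_ h.measurable
  exact pi_absolutelyContinuous (gaussianReal_absolutelyContinuous 0 one_ne_zero) _

theorem integral_sq_strongDual_stdGaussian (L : StrongDual ℝ E) :
    ∫ x, (L x) ^ 2 ∂(ProbabilityTheory.stdGaussian E) = ‖L‖ ^ 2 := by
  rw [← variance_dual_stdGaussian, variance_of_integral_eq_zero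
    L.continuous.aemeasurable (integral_strongDual_stdGaussian L)]

theorem integrable_norm_pow_stdGaussian_prod (n : ℕ) :
    Integrable (fun p : E × E => ‖p‖ ^ n)
      ((ProbabilityTheory.stdGaussian E).prod (ProbabilityTheory.stdGaussian E)) := by
  have := (IsGaussian.memLp_id ((ProbabilityTheory.stdGaussian E).prod
    (ProbabilityTheory.stdGaussian E)) n (by simp)).integrable_norm_pow'
  simpa using this

theorem integrable_ouIncrement_bound (L : NNReal) :
    Integrable (fun p : E × E => (1 / 2 + 3 * L * ‖p‖) * (9 * L ^ 2 * ‖p‖ ^ 2))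
      ((ProbabilityTheory.stdGaussian E).prod (ProbabilityTheory.stdGaussian E)) := by
  have i2 := integrable_norm_pow_stdGaussian_prod (E := E) 2
  have i3 := integrable_norm_pow_stdGaussian_prod (E := E) 3
  refine ((i2.const_mul (9 / 2 * (L : ℝ) ^ 2)).add (i3.const_mul (27 * (L : ℝ) ^ 3))).congr
    (Filter.Eventually.of_forall fun p => ?_)
  simp only [Pi.add_apply]
  ring

theorem integrable_ouIncrement {h : E → ℝ} {L : NNReal} (hh : LipschitzWith L h) {t : ℝ}
    (ht : t ∈ Icc (0 : ℝ) 1) : Integrable (ouIncrement h t)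
      ((ProbabilityTheory.stdGaussian E).prod (ProbabilityTheory.stdGaussian E)) := by
  refine ((integrable_ouIncrement_bound L).mul_const t).mono'
    (continuous_ouIncrement hh.continuous t).aestronglyMeasurable
    (Filter.Eventually.of_forall fun p => ?_)
  rw [Real.norm_eq_abs, abs_of_nonneg (ouIncrement_nonneg _ _ _)]
  exact ouIncrement_le hh ht p

theorem tendsto_integral_ouStep_increment {h : E → ℝ} {L : NNReal} (hh : LipschitzWith L h) :
    Filter.Tendsto (fun t : ℝ => ∫ p : E × E, ouIncrement h t p / t
      ∂((ProbabilityTheory.stdGaussian E).prod (ProbabilityTheory.stdGaussian E)))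
      (nhdsWithin 0 (Ioi 0))
      (nhds (∫ p : E × E, gaussianPDFReal 0 1 (h p.1) * (fderiv ℝ h p.1 p.2) ^ 2
        ∂((ProbabilityTheory.stdGaussian E).prod (ProbabilityTheory.stdGaussian E)))) := by
  set μ := (ProbabilityTheory.stdGaussian E).prod (ProbabilityTheory.stdGaussian E)
  refine tendsto_integral_filter_of_dominated_convergence _ ?_ ?_
    (integrable_ouIncrement_bound L) ?_
  · exact Filter.Eventually.of_forall fun t =>
      ((continuous_ouIncrement hh.continuous t).div_const t).aestronglyMeasurable
  · filter_upwards [Ioc_mem_nhdsGT (zero_lt_one' ℝ)] with t ht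
    refine Filter.Eventually.of_forall fun p => ?_
    rw [Real.norm_eq_abs, abs_of_nonneg (div_nonneg (ouIncrement_nonneg _ _ _) ht.1.le),
      div_le_iff₀ ht.1]
    exact ouIncrement_le hh ⟨ht.1.le, ht.2⟩ p
  · have hae : ∀ᵐ p ∂μ, DifferentiableAt ℝ h p.1 :=
      Measure.quasiMeasurePreserving_fst.ae
        (stdGaussian_absolutelyContinuous.ae_le (hh.ae_differentiableAt (μ := volume)))
    filter_upwards [hae] with p hp
    have t0 : Filter.Tendsto (fun t => ouStep t p - p.1) (nhdsWithin 0 (Ioi 0)) (nhds 0) := by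
      have : Continuous fun t => ouStep t p - p.1 := by unfold ouStep; fun_prop
      have := (this.tendsto 0).mono_left (nhdsWithin_le_nhds (s := Ioi (0 : ℝ)))
      simpa [ouStep] using this
    have t1 := (hasFDerivWithinAt_univ.2 hp.hasFDerivAt).lim t0
      (Filter.Eventually.of_forall fun _ => mem_univ _) (tendsto_smul_ouStep_sub p)
    simp only [add_sub_cancel, map_smul, smul_eq_mul] at t1
    have t2 : Filter.Tendsto (fun t => |h (ouStep t p) - h p.1|) (nhdsWithin 0 (Ioi 0))
        (nhds 0) := by
      have := ((hh.continuous.tendsto p.1).comp (f := fun t => ouStep t p)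
        (x := nhdsWithin 0 (Ioi 0))
        (by simpa using t0.add_const p.1)).sub_const (h p.1)
      simpa using this.abs
    have t3 := (t2.const_add (gaussianPDFReal 0 1 (h p.1) / 2)).mul (t1.pow 2)
    have e : (gaussianPDFReal 0 1 (h p.1) / 2 + 0) * (√2 * (fderiv ℝ h p.1) p.2) ^ 2 =
        gaussianPDFReal 0 1 (h p.1) * (fderiv ℝ h p.1 p.2) ^ 2 := by
      rw [mul_pow, Real.sq_sqrt zero_le_two]; ring
    rw [e] at t3
    refine t3.congr' ?_
    filter_upwards [self_mem_nhdsWithin] with t ht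
    have ht' : (0 : ℝ) < t := ht
    rw [mul_pow, inv_pow, Real.sq_sqrt ht'.le, ouIncrement]
    ring

theorem integral_fderiv_sq_le {h : E → ℝ} {L : NNReal} (hh : LipschitzWith L h) :
    ∫ p : E × E, gaussianPDFReal 0 1 (h p.1) * (fderiv ℝ h p.1 p.2) ^ 2
        ∂((ProbabilityTheory.stdGaussian E).prod (ProbabilityTheory.stdGaussian E)) ≤
      L ^ 2 * ∫ x, gaussianPDFReal 0 1 (h x) ∂(ProbabilityTheory.stdGaussian E) := by
  have hc := hh.continuous
  have hφ := continuous_gaussianPDFReal_zero_one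
  have hm : Measurable fun p : E × E => gaussianPDFReal 0 1 (h p.1) * (fderiv ℝ h p.1 p.2) ^ 2 := by
    have : Measurable fun p : E × E => fderiv ℝ h p.1 p.2 :=
      (isBoundedBilinearMap_apply (𝕜 := ℝ) (E := E) (F := ℝ)).continuous.measurable.comp
        (((measurable_fderiv ℝ h).comp measurable_fst).prodMk measurable_snd)
    exact (hφ.measurable.comp (hc.measurable.comp measurable_fst)).mul (this.pow_const 2)
  have hn : ∀ x, ‖fderiv ℝ h x‖ ≤ L := fun x => norm_fderiv_le_of_lipschitz ℝ hh
  have hi : Integrable (fun p : E × E => gaussianPDFReal 0 1 (h p.1) * (fderiv ℝ h p.1 p.2) ^ 2)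
      ((ProbabilityTheory.stdGaussian E).prod (ProbabilityTheory.stdGaussian E)) := by
    refine ((integrable_norm_pow_stdGaussian_prod (E := E) 2).const_mul ((L : ℝ) ^ 2)).mono'
      hm.aestronglyMeasurable (Filter.Eventually.of_forall fun p => ?_)
    rw [norm_mul, norm_pow, Real.norm_eq_abs,
      abs_of_nonneg (gaussianPDFReal_zero_one_pos _).le, ← mul_pow]
    have h1 : ‖fderiv ℝ h p.1 p.2‖ ≤ L * ‖p‖ := ((fderiv ℝ h p.1).le_opNorm _).trans
      (mul_le_mul (hn _) (norm_snd_le p) (norm_nonneg _) (NNReal.coe_nonneg L))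
    calc _ ≤ 1 * (L * ‖p‖) ^ 2 := mul_le_mul (gaussianPDFReal_zero_one_le_one _)
          (pow_le_pow_left₀ (norm_nonneg _) h1 2) (by positivity) zero_le_one
      _ = _ := one_mul _
  rw [integral_prod _ hi]
  simp only [integral_const_mul, integral_sq_strongDual_stdGaussian]
  rw [← integral_const_mul]
  refine integral_mono_of_nonneg (Filter.Eventually.of_forall fun x =>
      mul_nonneg (gaussianPDFReal_zero_one_pos _).le (by positivity))
    ((integrable_of_continuous_of_abs_le (hφ.comp hc) (C := 1) fun x => ?_).const_mul _)
    (Filter.Eventually.of_forall fun x => ?_)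
  · rw [Function.comp_apply, abs_of_nonneg (gaussianPDFReal_zero_one_pos _).le]
    exact gaussianPDFReal_zero_one_le_one _
  · have := pow_le_pow_left₀ (norm_nonneg _) (hn x) 2
    have h0 := (gaussianPDFReal_zero_one_pos (h x)).le
    simp only
    nlinarith
theorem integrable_gaussianPDFReal_comp {X : Type*} [TopologicalSpace X] [MeasurableSpace X]
    [OpensMeasurableSpace X] {μ : Measure X} [IsFiniteMeasure μ] {h : X → ℝ}
    (hc : Continuous h) : Integrable (fun x => gaussianPDFReal 0 1 (h x)) μ :=
  integrable_of_continuous_of_abs_le (continuous_gaussianPDFReal_zero_one.comp hc) (C := 1)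
    fun x => by
      rw [abs_of_nonneg (gaussianPDFReal_zero_one_pos _).le]
      exact gaussianPDFReal_zero_one_le_one _

theorem rexp_neg_mem_Icc {t : ℝ} (ht : 0 ≤ t) : rexp (-t) ∈ Icc (0 : ℝ) 1 :=
  ⟨(Real.exp_pos _).le, Real.exp_le_one_iff.2 (by linarith)⟩

theorem integral_gaussianPDFReal_probitMehler_mul_le {w : E → ℝ} (hw : Continuous w) {c : ℝ}
    (hc : c ∈ Icc (0 : ℝ) 1) {L : NNReal} (hh : LipschitzWith L (probitMehler c w)) {t : ℝ}
    (ht : t ∈ Icc (0 : ℝ) 1) :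
    ∫ x, gaussianPDFReal 0 1 (probitMehler (c * rexp (-t)) w x)
        ∂(ProbabilityTheory.stdGaussian E) ≤
      ∫ x, gaussianPDFReal 0 1 (probitMehler c w x) ∂(ProbabilityTheory.stdGaussian E) +
        ∫ p, ouIncrement (probitMehler c w) t p
          ∂((ProbabilityTheory.stdGaussian E).prod (ProbabilityTheory.stdGaussian E)) := by
  set h := probitMehler c w with hdef
  have hcont : Continuous h := hh.continuous
  have hφ := continuous_gaussianPDFReal_zero_one
  have hs : Continuous (fun p : E × E => ouStep t p) :=
    continuous_ouStep.comp (Continuous.prodMk_right t)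
  have hφi : Integrable (fun p : E × E => gaussianPDFReal 0 1 (h (ouStep t p)))
      ((ProbabilityTheory.stdGaussian E).prod (ProbabilityTheory.stdGaussian E)) :=
    integrable_gaussianPDFReal_comp (hcont.comp hs)
  have hgi : Integrable (fun p : E × E => profileGap (h p.1) (h (ouStep t p)))
      ((ProbabilityTheory.stdGaussian E).prod (ProbabilityTheory.stdGaussian E)) := by
    refine (integrable_ouIncrement hh ht).mono' (Continuous.aestronglyMeasurable ?_)
      (Filter.Eventually.of_forall fun p => ?_)
    · have := continuous_Phi
      unfold profileGap
      fun_prop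
    · rw [Real.norm_eq_abs, abs_of_nonneg (profileGap_nonneg _ _)]
      exact profileGap_le _ _
  have hpt : ∀ x, gaussianPDFReal 0 1 (probitMehler (c * rexp (-t)) w x) ≤
      ∫ g, (profileGap (h x) (h (ouStep t (x, g))) + gaussianPDFReal 0 1 (h (ouStep t (x, g))))
        ∂(ProbabilityTheory.stdGaussian E) := by
    intro x
    have h1 := profileGap_nonneg (h x) (probitMehler (c * rexp (-t)) w x)
    rw [profileGap, hdef, Phi_probitMehler_mul hw hc (rexp_neg_mem_Icc ht.1), ← hdef] at h1
    have h2 : Integrable (fun g => Phi (h (ouStep t (x, g)))) (ProbabilityTheory.stdGaussian E) :=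
      integrable_of_continuous_of_abs_le
        (continuous_Phi.comp (hcont.comp (hs.comp (Continuous.prodMk_right x))))
        fun _ => abs_Phi_le_one _
    have e : (fun g => profileGap (h x) (h (ouStep t (x, g))) +
        gaussianPDFReal 0 1 (h (ouStep t (x, g)))) = fun g =>
        (gaussianPDFReal 0 1 (h x) + h x * Phi (h x)) - h x * Phi (h (ouStep t (x, g))) := by
      ext g; rw [profileGap]; ring
    rw [e, integral_sub (integrable_const _) (h2.const_mul _), integral_const_mul, integral_const]
    rw [mehler] at h1
    simp only [ouStep, probReal_univ, one_smul]
    linarith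
  have hsum := hgi.add hφi
  have h3 := integral_mono
    (integrable_gaussianPDFReal_comp ((continuous_probitMehler hw).comp
      (Continuous.prodMk_right (c * rexp (-t)))) (μ := ProbabilityTheory.stdGaussian E))
    hsum.integral_prod_left hpt
  refine h3.trans ?_
  have h4 := integral_prod _ hsum
  simp only [Pi.add_apply] at h4 ⊢
  rw [← h4, integral_add hgi hφi, add_comm]
  have h5 : ∫ p : E × E, gaussianPDFReal 0 1 (h (ouStep t p))
      ∂((ProbabilityTheory.stdGaussian E).prod (ProbabilityTheory.stdGaussian E)) =
      ∫ x, gaussianPDFReal 0 1 (h x) ∂(ProbabilityTheory.stdGaussian E) := by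
    rw [integral_prod _ hφi]
    exact integral_mehler (hφ.comp hcont) (C := 1) (fun x => by
      rw [Function.comp_apply, abs_of_nonneg (gaussianPDFReal_zero_one_pos _).le]
      exact gaussianPDFReal_zero_one_le_one _) (rexp_neg_mem_Icc ht.1)
  rw [h5]
  exact add_le_add_right (integral_mono hgi (integrable_ouIncrement hh ht)
    fun p => profileGap_le _ _) _

theorem continuous_integral_gaussianPDFReal_probitMehler {w : E → ℝ} (hw : Continuous w) :
    Continuous fun c => ∫ x, gaussianPDFReal 0 1 (probitMehler c w x)
      ∂(ProbabilityTheory.stdGaussian E) := by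
  have h : Continuous fun p : ℝ × E => gaussianPDFReal 0 1 (probitMehler p.1 w p.2) :=
    continuous_gaussianPDFReal_zero_one.comp (continuous_probitMehler hw)
  have h1 : ∀ x, Continuous fun c => gaussianPDFReal 0 1 (probitMehler c w x) := fun x =>
    h.comp (f := fun c : ℝ => (c, x)) (by fun_prop)
  have h2 : ∀ c, Continuous fun x => gaussianPDFReal 0 1 (probitMehler c w x) := fun c =>
    h.comp (f := fun x : E => (c, x)) (by fun_prop)
  refine continuous_of_dominated (bound := fun _ => 1)
    (fun c => (h2 c).aestronglyMeasurable)
    (fun c => Filter.Eventually.of_forall fun x => ?_) (integrable_const 1)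
    (Filter.Eventually.of_forall h1)
  rw [Real.norm_eq_abs, abs_of_nonneg (gaussianPDFReal_zero_one_pos _).le]
  exact gaussianPDFReal_zero_one_le_one _

theorem lipschitzWith_probitMehler {w : E → ℝ} (hw : Continuous w) {l : ℝ} (hl : 0 ≤ l)
    (hwl : ∀ x y, w y ≤ w x + l * ‖y - x‖) {c : ℝ} (hc : c ∈ Icc (0 : ℝ) 1) :
    LipschitzWith (l * c / √(1 + l ^ 2 * (1 - c ^ 2))).toNNReal (probitMehler c w) := by
  refine LipschitzWith.of_le_add_mul _ fun x y => ?_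
  rw [Real.coe_toNNReal _ (by have := hc.1; positivity), dist_eq_norm]
  exact probitMehler_le_add hw hl hwl hc y x

theorem frequently_slope_lt {w : E → ℝ} (hw : Continuous w) {l : ℝ} (hl : 0 ≤ l)
    (hwl : ∀ x y, w y ≤ w x + l * ‖y - x‖) {t : ℝ} (ht : 0 ≤ t) {r : ℝ}
    (hr : l ^ 2 * rexp (-t) ^ 2 / (1 + l ^ 2 * (1 - rexp (-t) ^ 2)) *
      ∫ x, gaussianPDFReal 0 1 (probitMehler (rexp (-t)) w x)
        ∂(ProbabilityTheory.stdGaussian E) < r) :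
    ∃ᶠ z in nhdsWithin t (Ioi t), slope (fun t => ∫ x, gaussianPDFReal 0 1
      (probitMehler (rexp (-t)) w x) ∂(ProbabilityTheory.stdGaussian E)) t z < r := by
  have hc := rexp_neg_mem_Icc ht
  have hh := lipschitzWith_probitMehler hw hl hwl hc
  have hq : 0 ≤ 1 + l ^ 2 * (1 - rexp (-t) ^ 2) := by
    have : rexp (-t) ^ 2 ≤ 1 := pow_le_one₀ hc.1 hc.2
    nlinarith [sq_nonneg l]
  have h1 := integral_fderiv_sq_le hh
  rw [Real.coe_toNNReal _ (by have := hc.1; positivity), div_pow, mul_pow, Real.sq_sqrt hq] at h1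
  have h2 := (tendsto_integral_ouStep_increment hh).eventually_lt_const (h1.trans_lt hr)
  have h3 : Filter.Tendsto (fun z => z - t) (nhdsWithin t (Ioi t)) (nhdsWithin 0 (Ioi 0)) := by
    refine tendsto_nhdsWithin_iff.2 ⟨?_, ?_⟩
    · have : Continuous fun z : ℝ => z - t := by fun_prop
      have := (this.tendsto t).mono_left (nhdsWithin_le_nhds (s := Ioi t))
      rwa [sub_self] at this
    · filter_upwards [self_mem_nhdsWithin] with z hz
      exact mem_Ioi.2 (sub_pos.2 (mem_Ioi.1 hz))
  refine Filter.Eventually.frequently ?_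
  filter_upwards [h3.eventually h2, h3.eventually (Ioc_mem_nhdsGT (zero_lt_one' ℝ))] with z hz hz'
  refine lt_of_le_of_lt ?_ hz
  have h4 := integral_gaussianPDFReal_probitMehler_mul_le hw hc hh ⟨hz'.1.le, hz'.2⟩
  rw [← Real.exp_add] at h4
  rw [slope_def_field, integral_div, show -z = -t + -(z - t) by ring]
  exact div_le_div_of_nonneg_right (by linarith) hz'.1.le

theorem integral_gaussianPDFReal_probitMehler_exp_le {w : E → ℝ} (hw : Continuous w) {l : ℝ}
    (hl : 0 ≤ l) (hwl : ∀ x y, w y ≤ w x + l * ‖y - x‖) {T ε : ℝ} (hT : 0 ≤ T) (hε : 0 < ε) :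
    ∫ x, gaussianPDFReal 0 1 (probitMehler (rexp (-T)) w x)
        ∂(ProbabilityTheory.stdGaussian E) ≤
      (∫ x, gaussianPDFReal 0 1 (w x) ∂(ProbabilityTheory.stdGaussian E)) *
        √(1 + l ^ 2 * (1 - rexp (-T) ^ 2)) * rexp (ε * T) := by
  set k := ∫ x, gaussianPDFReal 0 1 (w x) ∂(ProbabilityTheory.stdGaussian E) with hk
  have hk0 : 0 < k := by
    rw [hk, integral_pos_iff_support_of_nonneg (fun x => (gaussianPDFReal_zero_one_pos _).le)
      (integrable_gaussianPDFReal_comp hw)]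
    have : Function.support (fun x => gaussianPDFReal 0 1 (w x)) = univ := by
      ext x; simp [(gaussianPDFReal_zero_one_pos _).ne']
    simp [this]
  have hq : ∀ t, 0 ≤ t → 0 < 1 + l ^ 2 * (1 - rexp (-t) ^ 2) := fun t ht => by
    have : rexp (-t) ^ 2 ≤ 1 := pow_le_one₀ (rexp_neg_mem_Icc ht).1 (rexp_neg_mem_Icc ht).2
    nlinarith [sq_nonneg l]
  refine image_le_of_liminf_slope_right_lt_deriv_boundary' (a := 0) (b := T)
    (f := fun t => ∫ x, gaussianPDFReal 0 1 (probitMehler (rexp (-t)) w x)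
        ∂(ProbabilityTheory.stdGaussian E))
    (B := fun t => k * √(1 + l ^ 2 * (1 - rexp (-t) ^ 2)) * rexp (ε * t))
    (B' := fun t => (l ^ 2 * rexp (-t) ^ 2 / (1 + l ^ 2 * (1 - rexp (-t) ^ 2)) + ε) *
      (k * √(1 + l ^ 2 * (1 - rexp (-t) ^ 2)) * rexp (ε * t)))
    ((continuous_integral_gaussianPDFReal_probitMehler hw).comp (by fun_prop)).continuousOn
    (fun t ht r hr => frequently_slope_lt hw hl hwl ht.1 hr) ?_ (by fun_prop) ?_ ?_
    (right_mem_Icc.2 hT)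
  · simp [probitMehler_one, hk]
  · intro t ht
    have h1 : HasDerivAt (fun t : ℝ => 1 + l ^ 2 * (1 - rexp (-t) ^ 2))
        (2 * l ^ 2 * rexp (-t) ^ 2) t := by
      have := (((((hasDerivAt_id t).neg.exp).pow 2).const_sub 1).const_mul (l ^ 2)).const_add 1
      refine this.congr_deriv ?_
      simp
      ring
    have h2 : HasDerivAt (fun t : ℝ => rexp (ε * t)) (ε * rexp (ε * t)) t := by
      have := ((hasDerivAt_id t).const_mul ε).exp
      refine this.congr_deriv ?_
      simp
      ring
    have h3 := ((h1.sqrt (hq t ht.1).ne').const_mul k).mul h2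
    refine (h3.congr_deriv ?_).hasDerivWithinAt
    have hs := Real.sq_sqrt (hq t ht.1).le
    have hs0 := Real.sqrt_pos.2 (hq t ht.1)
    have hq0 := hq t ht.1
    set q := 1 + l ^ 2 * (1 - rexp (-t) ^ 2)
    conv_rhs => rw [← hs]
    rw [Real.sqrt_sq hs0.le]
    field_simp
  · intro t ht h
    rw [h, add_mul]
    have := hq t ht.1
    have := Real.sqrt_pos.2 this
    exact lt_add_of_pos_right _ (by positivity)

/-- The Gaussian isoperimetric inequality for smoothed half-space-like test functions `Φ ∘ w`. -/
theorem gaussianPDFReal_PhiInv_integral_le {w : E → ℝ} (hw : Continuous w) {l : ℝ}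
    (hl : 0 ≤ l) (hwl : ∀ x y, w y ≤ w x + l * ‖y - x‖) :
    gaussianPDFReal 0 1 (PhiInv (∫ x, Phi (w x) ∂(ProbabilityTheory.stdGaussian E))) ≤
      √(1 + l ^ 2) * ∫ x, gaussianPDFReal 0 1 (w x) ∂(ProbabilityTheory.stdGaussian E) := by
  have hb : ∀ T, 0 ≤ T → ∫ x, gaussianPDFReal 0 1 (probitMehler (rexp (-T)) w x)
      ∂(ProbabilityTheory.stdGaussian E) ≤ √(1 + l ^ 2 * (1 - rexp (-T) ^ 2)) *
        ∫ x, gaussianPDFReal 0 1 (w x) ∂(ProbabilityTheory.stdGaussian E) := by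
    intro T hT
    have hcont : Continuous fun ε : ℝ =>
        (∫ x, gaussianPDFReal 0 1 (w x) ∂(ProbabilityTheory.stdGaussian E)) *
        √(1 + l ^ 2 * (1 - rexp (-T) ^ 2)) * rexp (ε * T) := by fun_prop
    have h1 := (hcont.tendsto 0).mono_left (nhdsWithin_le_nhds (s := Ioi (0 : ℝ)))
    rw [zero_mul, Real.exp_zero, mul_one, mul_comm] at h1
    refine ge_of_tendsto h1 ?_
    filter_upwards [self_mem_nhdsWithin] with ε hε
    refine (integral_gaussianPDFReal_probitMehler_exp_le hw hl hwl hT hε).trans_eq ?_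
    ring
  have hexp : Filter.Tendsto (fun T : ℝ => rexp (-T)) Filter.atTop (nhds 0) :=
    Real.tendsto_exp_neg_atTop_nhds_zero
  have h1 := ((continuous_integral_gaussianPDFReal_probitMehler hw).tendsto 0).comp hexp
  have h2 : Continuous fun c : ℝ => √(1 + l ^ 2 * (1 - c ^ 2)) *
      ∫ x, gaussianPDFReal 0 1 (w x) ∂(ProbabilityTheory.stdGaussian E) := by fun_prop
  have h3 := (h2.tendsto 0).comp hexp
  have h4 := le_of_tendsto_of_tendsto h1 h3 (by
    filter_upwards [Filter.eventually_ge_atTop 0] with T hT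
    exact hb T hT)
  simpa [probitMehler, mehler] using h4
end

theorem tendsto_gaussianExcess_atTop :
    Filter.Tendsto gaussianExcess Filter.atTop (nhds 0) := by
  have h1 : Filter.Tendsto (gaussianPDFReal 0 1) Filter.atTop (nhds 0) := by
    have h2 : Filter.Tendsto (fun x : ℝ => -x ^ 2 / 2) Filter.atTop Filter.atBot := by
      have := ((Filter.tendsto_pow_atTop (α := ℝ) two_ne_zero).atTop_div_const zero_lt_two)
      refine (Filter.tendsto_neg_atTop_atBot.comp this).congr fun x => ?_
      simp [neg_div]
    have := (Real.tendsto_exp_atBot.comp h2).const_mul (√(2 * π))⁻¹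
    rw [mul_zero] at this
    exact this.congr fun x => (gaussianPDFReal_zero_one_apply x).symm
  refine squeeze_zero' (Filter.Eventually.of_forall gaussianExcess_nonneg) ?_ h1
  filter_upwards [Filter.eventually_ge_atTop 0] with x hx
  rw [gaussianExcess]
  nlinarith [Phi_nonneg (-x)]

section
variable {E : Type*} [NormedAddCommGroup E] [InnerProductSpace ℝ E] [FiniteDimensional ℝ E]
  [MeasurableSpace E] [BorelSpace E]

theorem hasDerivAt_integral_Phi_mul_sub {F : E → ℝ} (hF : Continuous F) {l : ℝ} (hl : 0 ≤ l)
    (t : ℝ) : HasDerivAt (fun t => ∫ x, Phi (l * (t - F x)) ∂(ProbabilityTheory.stdGaussian E))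
      (l * ∫ x, gaussianPDFReal 0 1 (l * (t - F x)) ∂(ProbabilityTheory.stdGaussian E)) t := by
  have hφ := continuous_gaussianPDFReal_zero_one
  have hΦ := continuous_Phi
  rw [← integral_const_mul]
  refine (hasDerivAt_integral_of_dominated_loc_of_deriv_le (bound := fun _ => l)
    (F' := fun t x => l * gaussianPDFReal 0 1 (l * (t - F x)))
    Filter.univ_mem (Filter.Eventually.of_forall fun s => Continuous.aestronglyMeasurable
      (by fun_prop))
    (integrable_of_continuous_of_abs_le (by fun_prop) fun _ => abs_Phi_le_one _)
    (Continuous.aestronglyMeasurable (by fun_prop))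
    (Filter.Eventually.of_forall fun x s _ => ?_) (integrable_const l)
    (Filter.Eventually.of_forall fun x s _ => ?_)).2
  · rw [norm_mul, Real.norm_eq_abs, Real.norm_eq_abs, abs_of_nonneg hl,
      abs_of_nonneg (gaussianPDFReal_zero_one_pos _).le]
    exact mul_le_of_le_one_right hl (gaussianPDFReal_zero_one_le_one _)
  · refine ((hasDerivAt_Phi _).comp s (((hasDerivAt_id s).sub_const (F x)).const_mul l)).congr_deriv
      ?_
    simp [mul_comm]

theorem integrable_gaussianExcess_mul_sub {F : E → ℝ} (hF : Continuous F)
    (hFi : Integrable F (ProbabilityTheory.stdGaussian E)) (l t : ℝ) :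
    Integrable (fun x => gaussianExcess (l * (t - F x))) (ProbabilityTheory.stdGaussian E) := by
  have hψ := continuous_gaussianExcess
  refine ((((integrable_const t).sub hFi).const_mul l).abs.add (integrable_const 1)).mono'
    (Continuous.aestronglyMeasurable (by fun_prop)) (Filter.Eventually.of_forall fun x => ?_)
  rw [Real.norm_eq_abs, abs_of_nonneg (gaussianExcess_nonneg _)]
  exact gaussianExcess_le _

theorem hasDerivAt_integral_gaussianExcess_mul_sub {F : E → ℝ} (hF : Continuous F)
    (hFi : Integrable F (ProbabilityTheory.stdGaussian E)) {l : ℝ} (hl : 0 ≤ l) (t : ℝ) :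
    HasDerivAt (fun t => ∫ x, gaussianExcess (l * (t - F x)) ∂(ProbabilityTheory.stdGaussian E))
      (-l * (1 - ∫ x, Phi (l * (t - F x)) ∂(ProbabilityTheory.stdGaussian E))) t := by
  have hΦ := continuous_Phi
  have hψ := continuous_gaussianExcess
  have hΦi : Integrable (fun x => Phi (l * (t - F x))) (ProbabilityTheory.stdGaussian E) :=
    integrable_of_continuous_of_abs_le (by fun_prop) fun _ => abs_Phi_le_one _
  have e : -l * (1 - ∫ x, Phi (l * (t - F x)) ∂(ProbabilityTheory.stdGaussian E)) =
      ∫ x, -l * Phi (-(l * (t - F x))) ∂(ProbabilityTheory.stdGaussian E) := by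
    simp only [Phi_neg]
    rw [integral_const_mul, integral_sub (integrable_const 1) hΦi]
    simp
  rw [e]
  refine (hasDerivAt_integral_of_dominated_loc_of_deriv_le (bound := fun _ => l)
    (F' := fun t x => -l * Phi (-(l * (t - F x))))
    Filter.univ_mem (Filter.Eventually.of_forall fun s => Continuous.aestronglyMeasurable
      (by fun_prop))
    (integrable_gaussianExcess_mul_sub hF hFi l t)
    (Continuous.aestronglyMeasurable (by fun_prop))
    (Filter.Eventually.of_forall fun x s _ => ?_) (integrable_const l)
    (Filter.Eventually.of_forall fun x s _ => ?_)).2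
  · rw [norm_mul, Real.norm_eq_abs, Real.norm_eq_abs, abs_neg, abs_of_nonneg hl]
    exact mul_le_of_le_one_right hl (abs_Phi_le_one _)
  · refine ((hasDerivAt_gaussianExcess _).comp s
      (((hasDerivAt_id s).sub_const (F x)).const_mul l)).congr_deriv ?_
    simp [mul_comm]

theorem tendsto_integral_gaussianExcess_mul_sub {F : E → ℝ} (hF : Continuous F)
    (hFi : Integrable F (ProbabilityTheory.stdGaussian E)) {l : ℝ} (hl : 0 < l) :
    Filter.Tendsto (fun t => ∫ x, gaussianExcess (l * (t - F x))
      ∂(ProbabilityTheory.stdGaussian E)) Filter.atTop (nhds 0) := by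
  have hψ := continuous_gaussianExcess
  rw [← integral_zero E ℝ (μ := ProbabilityTheory.stdGaussian E)]
  refine tendsto_integral_filter_of_dominated_convergence
    (fun x => gaussianExcess (l * (0 - F x)))
    (Filter.Eventually.of_forall fun t => Continuous.aestronglyMeasurable (by fun_prop)) ?_
    (integrable_gaussianExcess_mul_sub hF hFi l 0) (Filter.Eventually.of_forall fun x => ?_)
  · filter_upwards [Filter.eventually_ge_atTop 0] with t ht
    refine Filter.Eventually.of_forall fun x => ?_
    rw [Real.norm_eq_abs, abs_of_nonneg (gaussianExcess_nonneg _)]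
    exact antitone_gaussianExcess (by gcongr)
  · refine tendsto_gaussianExcess_atTop.comp (Filter.Tendsto.const_mul_atTop hl ?_)
    exact Filter.tendsto_atTop_add_const_right _ _ Filter.tendsto_id

theorem integral_gaussianExcess_mul_sub_le {F : E → ℝ} (hF : ∀ x y, F y ≤ F x + ‖y - x‖)
    (hFc : Continuous F) (hFi : Integrable F (ProbabilityTheory.stdGaussian E)) {l : ℝ}
    (hl : 0 < l) (t₀ : ℝ) :
    ∫ x, gaussianExcess (l * (t₀ - F x)) ∂(ProbabilityTheory.stdGaussian E) ≤
      √(1 + l ^ 2) * gaussianExcess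
        (PhiInv (∫ x, Phi (l * (t₀ - F x)) ∂(ProbabilityTheory.stdGaussian E))) := by
  have hp : ∀ t, ∫ x, Phi (l * (t - F x)) ∂(ProbabilityTheory.stdGaussian E) ∈ Ioo (0 : ℝ) 1 :=
    fun t => integral_Phi_mem_Ioo (w := fun x => l * (t - F x)) (by fun_prop)
  set p := fun t => ∫ x, Phi (l * (t - F x)) ∂(ProbabilityTheory.stdGaussian E) with hpdef
  set D := fun t => √(1 + l ^ 2) * gaussianExcess (PhiInv (p t)) -
    ∫ x, gaussianExcess (l * (t - F x)) ∂(ProbabilityTheory.stdGaussian E) with hD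
  have hder : ∀ t, HasDerivAt D (√(1 + l ^ 2) * (-Phi (-PhiInv (p t)) *
      ((gaussianPDFReal 0 1 (PhiInv (p t)))⁻¹ *
        (l * ∫ x, gaussianPDFReal 0 1 (l * (t - F x)) ∂(ProbabilityTheory.stdGaussian E)))) -
      -l * (1 - p t)) t := fun t =>
    (((hasDerivAt_gaussianExcess _).comp t ((hasDerivAt_PhiInv (hp t)).comp t
      (hasDerivAt_integral_Phi_mul_sub hFc hl.le t))).const_mul _).sub
      (hasDerivAt_integral_gaussianExcess_mul_sub hFc hFi hl.le t)
  have hanti : Antitone D := by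
    refine antitone_of_deriv_nonpos (fun t => (hder t).differentiableAt) fun t => ?_
    have h1 := gaussianPDFReal_PhiInv_integral_le (w := fun x => l * (t - F x)) (by fun_prop)
      hl.le fun x y => by nlinarith [hF y x, norm_sub_rev x y]
    have h2 := gaussianPDFReal_zero_one_pos (PhiInv (p t))
    have h3 : 1 ≤ (gaussianPDFReal 0 1 (PhiInv (p t)))⁻¹ * (√(1 + l ^ 2) *
        ∫ x, gaussianPDFReal 0 1 (l * (t - F x)) ∂(ProbabilityTheory.stdGaussian E)) := by
      rw [inv_mul_eq_div, one_le_div h2]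
      exact h1
    rw [(hder t).deriv, Phi_neg, Phi_PhiInv (hp t)]
    have h4 : 0 ≤ l * (1 - p t) := mul_nonneg hl.le (by linarith [(hp t).2])
    nlinarith [mul_le_mul_of_nonneg_left h3 h4]
  have hlim := (tendsto_integral_gaussianExcess_mul_sub hFc hFi hl).neg
  rw [neg_zero] at hlim
  have : 0 ≤ D t₀ := by
    refine le_of_tendsto hlim ?_
    filter_upwards [Filter.eventually_ge_atTop t₀] with t ht
    refine le_trans ?_ (hanti ht)
    have := mul_nonneg (Real.sqrt_nonneg (1 + l ^ 2)) (gaussianExcess_nonneg (PhiInv (p t)))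
    simp only [hD]
    linarith
  simp only [hD] at this
  linarith

theorem integral_le_add_gaussianExcess {F : E → ℝ} (hF : ∀ x y, F y ≤ F x + ‖y - x‖)
    (hFc : Continuous F) (hFi : Integrable F (ProbabilityTheory.stdGaussian E))
    {A : Set E} (hA : MeasurableSet A) (hFA : ∀ x ∈ A, F x = 0) {a : ℝ}
    (ha : Phi a = (ProbabilityTheory.stdGaussian E).real A) {x : ℝ} (hx : 0 < x) :
    ∫ x, F x ∂(ProbabilityTheory.stdGaussian E) ≤
      x⁻¹ + √(1 + x⁻¹ ^ 4) * gaussianExcess (PhiInv (Phi x * Phi a)) := by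
  set l := x ^ 2
  have hl : 0 < l := by positivity
  have hΦ := continuous_Phi
  have h1 := integral_gaussianExcess_mul_sub_le hF hFc hFi hl x⁻¹
  have h2 : l * (∫ x, F x ∂(ProbabilityTheory.stdGaussian E) - x⁻¹) ≤
      ∫ y, gaussianExcess (l * (x⁻¹ - F y)) ∂(ProbabilityTheory.stdGaussian E) := by
    have e : l * (∫ x, F x ∂(ProbabilityTheory.stdGaussian E) - x⁻¹) =
        ∫ y, l * (F y - x⁻¹) ∂(ProbabilityTheory.stdGaussian E) := by
      rw [integral_const_mul, integral_sub hFi (integrable_const _)]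
      simp
    rw [e]
    refine integral_mono ((hFi.sub (integrable_const _)).const_mul l)
      (integrable_gaussianExcess_mul_sub hFc hFi l _) fun y => ?_
    refine le_trans (le_of_eq ?_) (neg_le_gaussianExcess _)
    ring
  have h3 : Phi x * Phi a ≤
      ∫ y, Phi (l * (x⁻¹ - F y)) ∂(ProbabilityTheory.stdGaussian E) := by
    have e : Phi x * Phi a = ∫ y, A.indicator (fun _ => Phi x) y
        ∂(ProbabilityTheory.stdGaussian E) := by
      rw [integral_indicator_const _ hA, ha, smul_eq_mul, mul_comm]
    rw [e]
    refine integral_mono ((integrable_const _).indicator hA)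
      (integrable_of_continuous_of_abs_le (by fun_prop) fun _ => abs_Phi_le_one _) fun y => ?_
    by_cases hy : y ∈ A
    · have : l * (x⁻¹ - 0) = x := by simp only [l]; field_simp; simp
      simp only [indicator_of_mem hy, hFA y hy, this, le_refl]
    · simp only [indicator_of_notMem hy]
      exact Phi_nonneg _
  have h4 : PhiInv (Phi x * Phi a) ≤
      PhiInv (∫ y, Phi (l * (x⁻¹ - F y)) ∂(ProbabilityTheory.stdGaussian E)) := by
    rw [← strictMono_Phi.le_iff_le, Phi_PhiInv, Phi_PhiInv]
    · exact h3
    · exact integral_Phi_mem_Ioo (w := fun y => l * (x⁻¹ - F y)) (by fun_prop)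
    · exact ⟨mul_pos (Phi_pos _) (Phi_pos _),
        mul_lt_one_of_nonneg_of_lt_one_left (Phi_nonneg _) (Phi_lt_one _) (Phi_lt_one _).le⟩
  have h5 := mul_le_mul_of_nonneg_left (antitone_gaussianExcess h4) (Real.sqrt_nonneg (1 + l ^ 2))
  have e : √(1 + l ^ 2) = l * √(1 + x⁻¹ ^ 4) := by
    rw [← Real.sqrt_sq hl.le, ← Real.sqrt_mul (by positivity), Real.sqrt_sq hl.le]
    congr 1
    simp only [l]
    field_simp
    ring
  have h6 := h2.trans (h1.trans h5)
  rw [e, mul_assoc] at h6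
  linarith [le_of_mul_le_mul_left h6 hl]

/-- The mean distance to a set of Gaussian measure `Φ a` is largest for half-spaces. -/
theorem integral_le_gaussianExcess {F : E → ℝ} (hF : ∀ x y, F y ≤ F x + ‖y - x‖)
    (hFc : Continuous F) (hFi : Integrable F (ProbabilityTheory.stdGaussian E))
    {A : Set E} (hA : MeasurableSet A) (hFA : ∀ x ∈ A, F x = 0) {a : ℝ}
    (ha : Phi a = (ProbabilityTheory.stdGaussian E).real A) :
    ∫ x, F x ∂(ProbabilityTheory.stdGaussian E) ≤ gaussianExcess a := by
  have h1 : Filter.Tendsto (fun x : ℝ => gaussianExcess (PhiInv (Phi x * Phi a))) Filter.atTop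
      (nhds (gaussianExcess a)) := by
    have h2 := tendsto_Phi_atTop.mul_const (Phi a)
    rw [one_mul] at h2
    have h3 := (continuousAt_PhiInv ⟨Phi_pos a, Phi_lt_one a⟩).tendsto.comp h2
    rw [PhiInv_Phi] at h3
    exact (continuous_gaussianExcess.tendsto a).comp h3
  have h2 : Filter.Tendsto (fun x : ℝ => x⁻¹) Filter.atTop (nhds 0) := tendsto_inv_atTop_zero
  have h3 : Filter.Tendsto (fun x : ℝ => √(1 + x⁻¹ ^ 4)) Filter.atTop (nhds 1) := by
    have : Continuous fun y : ℝ => √(1 + y ^ 4) := by fun_prop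
    have := (this.tendsto 0).comp h2
    simpa [Function.comp_def] using this
  have h4 := h2.add (h3.mul h1)
  rw [zero_add, one_mul] at h4
  refine ge_of_tendsto h4 ?_
  filter_upwards [Filter.eventually_gt_atTop 0] with x hx
  exact integral_le_add_gaussianExcess hF hFc hFi hA hFA ha hx

theorem integrable_infDist_stdGaussian (A : Set E) :
    Integrable (fun x => Metric.infDist x A) (ProbabilityTheory.stdGaussian E) := by
  have h : Integrable (fun x : E => ‖x‖) (ProbabilityTheory.stdGaussian E) :=
    IsGaussian.integrable_id.norm
  refine (h.add (integrable_const (Metric.infDist (0 : E) A))).mono'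
    (Metric.continuous_infDist_pt A).aestronglyMeasurable (Filter.Eventually.of_forall fun x => ?_)
  rw [Real.norm_eq_abs, abs_of_nonneg Metric.infDist_nonneg]
  have := Metric.infDist_le_infDist_add_dist (s := A) (x := x) (y := 0)
  rw [dist_zero_right] at this
  simp only [Pi.add_apply]
  linarith

theorem integral_infDist_stdGaussian_le {A : Set E} (hA : MeasurableSet A) {a : ℝ}
    (ha : Phi a = (ProbabilityTheory.stdGaussian E).real A) :
    ∫ x, Metric.infDist x A ∂(ProbabilityTheory.stdGaussian E) ≤ gaussianExcess a :=
  integral_le_gaussianExcess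
    (fun x y => by rw [← dist_eq_norm]; exact Metric.infDist_le_infDist_add_dist)
    (Metric.continuous_infDist_pt A) (integrable_infDist_stdGaussian A) hA
    (fun _ hx => Metric.infDist_zero_of_mem hx) ha
end

theorem l2_eq_norm {d : ℕ} (z : Fin d → ℝ) : l2 z = ‖WithLp.toLp 2 z‖ := by
  rw [EuclideanSpace.norm_eq]
  simp [l2]

theorem distSet_nonneg {d : ℕ} (z : Fin d → ℝ) (A : Set (Fin d → ℝ)) : 0 ≤ distSet z A :=
  Real.sInf_nonneg (by rintro _ ⟨z', -, rfl⟩; exact Real.sqrt_nonneg _)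

theorem distSet_le_infDist {d : ℕ} (z : Fin d → ℝ) {A : Set (Fin d → ℝ)} (hA : A.Nonempty) :
    distSet z A ≤ Metric.infDist (WithLp.toLp 2 z) (WithLp.ofLp (p := 2) ⁻¹' A) := by
  obtain ⟨z₀, hz₀⟩ := hA
  refine (Metric.le_infDist ⟨WithLp.toLp 2 z₀, hz₀⟩).2 fun {y} hy => ?_
  refine csInf_le ⟨0, ?_⟩ ⟨y.ofLp, hy, ?_⟩
  · rintro _ ⟨z', -, rfl⟩; exact Real.sqrt_nonneg _
  · rw [l2_eq_norm, dist_eq_norm]; rfl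

theorem stdGaussian_map_toLp (d : ℕ) : (_root_.stdGaussian d).map (WithLp.toLp 2) =
    ProbabilityTheory.stdGaussian (EuclideanSpace ℝ (Fin d)) :=
  map_pi_eq_stdGaussian

/-- Bound on the expected latent-space robustness (used in Theorem 4). -/
theorem expected_latent_robustness_bound (d K : ℕ)
    (B : Fin K → Set (Fin d → ℝ))
    (hmeas : ∀ i, MeasurableSet (B i))
    (hdisj : Pairwise (Function.onFun Disjoint B))
    (hcover : (⋃ i, B i) = Set.univ)
    (a : Fin K → ℝ)
    (ha : ∀ i, Phi (a i) = ((stdGaussian d) (⋃ j, ⋃ _ : j ≠ i, B j)).toReal) :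
    (∫ z, distSet z {z' | ∀ i, z ∈ B i → z' ∉ B i} ∂(stdGaussian d)) ≤
      ∑ i, (-(a i) * Phi (-(a i)) + Real.exp (-(a i) ^ 2 / 2) / Real.sqrt (2 * π)) := by
  set A : Fin K → Set (Fin d → ℝ) := fun i => ⋃ j, ⋃ _ : j ≠ i, B j with hAdef
  have hA : ∀ i, MeasurableSet (A i) := fun i =>
    MeasurableSet.iUnion fun j => MeasurableSet.iUnion fun _ => hmeas j
  have hAc : ∀ i, A i = (B i)ᶜ := fun i => by
    ext z
    simp only [hAdef, mem_iUnion, exists_prop, mem_compl_iff]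
    constructor
    · rintro ⟨j, hj, hz⟩ hzi
      exact disjoint_left.1 (hdisj hj) hz hzi
    · intro hz
      obtain ⟨j, hj⟩ := mem_iUnion.1 (hcover ▸ mem_univ z)
      exact ⟨j, fun h => hz (h ▸ hj), hj⟩
  have hlp : Measurable (WithLp.toLp 2 : (Fin d → ℝ) → EuclideanSpace ℝ (Fin d)) := by fun_prop
  have hA' : ∀ i, MeasurableSet (WithLp.ofLp (p := 2) ⁻¹' A i : Set (EuclideanSpace ℝ (Fin d))) :=
    fun i => (by fun_prop : Measurable (WithLp.ofLp (p := 2) (V := Fin d → ℝ))) (hA i)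
  have ha' : ∀ i, Phi (a i) =
      (ProbabilityTheory.stdGaussian (EuclideanSpace ℝ (Fin d))).real
        (WithLp.ofLp (p := 2) ⁻¹' A i) := fun i => by
    rw [ha, ← stdGaussian_map_toLp, map_measureReal_apply hlp (hA' i)]
    rfl
  have hne : ∀ i, (A i).Nonempty := fun i => by
    refine nonempty_iff_ne_empty.2 fun h => (Phi_pos (a i)).ne' ?_
    rw [ha i]
    change ((_root_.stdGaussian d) (A i)).toReal = 0
    simp [h]
  have hcell : ∀ z i, z ∈ B i → {z' | ∀ i, z ∈ B i → z' ∉ B i} = A i := fun z i hz => by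
    rw [hAc]
    ext z'
    refine ⟨fun h => h i hz, fun h j hj => ?_⟩
    have : j = i := by
      by_contra hij
      exact disjoint_left.1 (hdisj hij) hj hz
    rwa [this]
  have hint : ∀ i, Integrable (fun z => Metric.infDist (WithLp.toLp 2 z)
      (WithLp.ofLp (p := 2) ⁻¹' A i : Set (EuclideanSpace ℝ (Fin d)))) (_root_.stdGaussian d) :=
    fun i => by
      have h := integrable_infDist_stdGaussian
        (WithLp.ofLp (p := 2) ⁻¹' A i : Set (EuclideanSpace ℝ (Fin d)))
      rw [← stdGaussian_map_toLp] at h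
      exact h.comp_measurable hlp
  have hpt : ∀ z, distSet z {z' | ∀ i, z ∈ B i → z' ∉ B i} ≤ ∑ i, Metric.infDist
      (WithLp.toLp 2 z) (WithLp.ofLp (p := 2) ⁻¹' A i : Set (EuclideanSpace ℝ (Fin d))) := by
    intro z
    obtain ⟨i, hi⟩ := mem_iUnion.1 (hcover ▸ mem_univ z)
    rw [hcell z i hi]
    exact (distSet_le_infDist z (hne i)).trans (Finset.single_le_sum
      (f := fun i => Metric.infDist (WithLp.toLp 2 z)
        (WithLp.ofLp (p := 2) ⁻¹' A i : Set (EuclideanSpace ℝ (Fin d))))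
      (fun _ _ => Metric.infDist_nonneg) (Finset.mem_univ i))
  refine (integral_mono_of_nonneg (Filter.Eventually.of_forall fun z => distSet_nonneg _ _)
    (integrable_finsetSum _ fun i _ => hint i) (Filter.Eventually.of_forall hpt)).trans ?_
  rw [integral_finsetSum _ fun i _ => hint i]
  refine Finset.sum_le_sum fun i _ => ?_
  have h1 := integral_infDist_stdGaussian_le (hA' i) (ha' i)
  rw [← stdGaussian_map_toLp, integral_map hlp.aemeasurable
    (Metric.continuous_infDist_pt _).aestronglyMeasurable] at h1
  refine h1.trans (le_of_eq ?_)
  rw [gaussianExcess, gaussianPDFReal_zero_one_apply]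
  ring
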